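/- Let q be a prime power with q ≡ 1 (mod 4) and 3 dividing q-1, let ζ be a square root of -1 in F_q, let C_5 = {0, 1, -1, ζ, -ζ}, and let χ₃ be a multiplicative character of F_q of order 3 with complex values (extended by χ₃(0) = 0). Then the sum S(3;q,5) = Σ_{γ ∈ F_q \ C_5} Π_{α ∈ C_5} (2 - χ₃(γ - α) - χ₃((γ - α)²)) is a real number and satisfies S(3;q,5) ≥ 2^5 (q - 49√q - 160). -/

import Mathlib

open Finset

/-!
Expanding the product over the excluded points leaves the constant term, of order `q`, and sums
`∑ x, ∏ i, (χ ^ e i) (x - v i)`, each of which is at most `(k - 1) √q` in norm for `k` distinct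
points by Weil's bound.

For the Weil bound, Stepanov's method controls, over every extension of degree `n`, the number of
points where `χ` takes a given value at a polynomial, which bounds the lifted sums by
`C q ^ (n / 2)`. Up to sign these are the power sums of the inverse roots of the `L`-function of the
completely multiplicative function `g ↦ ∏ i, (χ ^ e i) (g (v i))` on monic polynomials;
the `L`-function is a polynomial of degree less than `k`, and were an inverse root larger than `√q`,
its logarithmic derivative would have a pole inside the disc where the power series of the power
sums converges. Stepanov's argument needs the sum of the exponents to be prime to the order of
`χ`; when the order is prime and this fails, the product of the characters is trivial, and moving
one of the points to infinity reduces to the first case.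
-/

section Stepanov

open Polynomial

theorem pow_dvd_hasseDeriv_pow_mul {R : Type*} [CommSemiring R] (f s : R[X]) (N l : ℕ) :
    f ^ (N - l) ∣ hasseDeriv l (f ^ N * s) := by
  induction N generalizing l with
  | zero => simp
  | succ N ih =>
    rw [pow_succ', mul_assoc, hasseDeriv_mul]
    refine Finset.dvd_sum fun ⟨i, j⟩ hij => ?_
    replace hij : i + j = l := by simpa using hij
    rcases Nat.eq_zero_or_pos i with rfl | hi
    · obtain rfl : j = l := by omega
      rw [hasseDeriv_zero']
      refine (pow_dvd_pow f (by omega : N + 1 - j ≤ (N - j) + 1)).trans ?_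
      rw [pow_succ']
      exact mul_dvd_mul_left _ (ih j)
    · exact ((pow_dvd_pow f (by omega)).trans (ih j)).mul_left _

theorem X_sub_C_pow_dvd_of_hasseDeriv {R : Type*} [CommRing R] {p : R[X]} {x : R} {n : ℕ}
    (h : ∀ l < n, (hasseDeriv l p).eval x = 0) : (X - C x) ^ n ∣ p := by
  rw [X_sub_C_pow_dvd_iff, ← taylor_apply, X_pow_dvd_iff]
  intro l hl
  rw [taylor_coeff, h l hl]

theorem hasseDeriv_mul_X_pow_card {K : Type*} [Field K] [Fintype K] (p : K[X]) (j : ℕ) {l : ℕ}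
    (hl : l < Fintype.card K) :
    hasseDeriv l (p * X ^ (j * Fintype.card K)) =
      hasseDeriv l p * X ^ (j * Fintype.card K) := by
  have hasseDeriv_X_pow : ∀ i, 0 < i → i < Fintype.card K →
      hasseDeriv i (X ^ (j * Fintype.card K) : K[X]) = 0 := by
    intro i hi hi'
    have hchoose : (((j * Fintype.card K).choose i : ℕ) : K) = 0 := by
      rw [← coeff_one_add_X_pow, pow_mul, ← FiniteField.expand_card, coeff_expand (by omega),
        if_neg (Nat.not_dvd_of_pos_of_lt hi hi')]
    rw [X_pow_eq_monomial, hasseDeriv_monomial, hchoose, zero_mul, map_zero]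
  rw [hasseDeriv_mul, Finset.sum_eq_single (l, 0) _ (by simp), hasseDeriv_zero']
  rintro ⟨a, b⟩ hab hne
  replace hab : a + b = l := by simpa using hab
  have hb : 0 < b := Nat.pos_of_ne_zero fun h => hne (by simp [← hab, h])
  rw [hasseDeriv_X_pow b hb (by omega), mul_zero]

variable {K : Type*} [Field K]

theorem exists_linearMap_hasseDeriv_pow_mul {f : K[X]} (hf : f ≠ 0) {N l : ℕ} (hl : l ≤ N) :
    ∃ E : K[X] →ₗ[K] K[X], ∀ s, hasseDeriv l (f ^ N * s) = f ^ (N - l) * E s ∧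
      (E s).natDegree ≤ s.natDegree + l * f.natDegree := by
  have hf0 : f ^ (N - l) ≠ 0 := pow_ne_zero _ hf
  choose E hE using fun s => pow_dvd_hasseDeriv_pow_mul f s N l
  refine ⟨⟨⟨E, fun s t => ?_⟩, fun c s => ?_⟩, fun s => ⟨hE s, ?_⟩⟩
  · apply mul_left_cancel₀ hf0
    rw [← hE, mul_add, map_add, mul_add, hE, hE]
  · apply mul_left_cancel₀ hf0
    rw [← hE, mul_smul_comm, map_smul, hE, RingHom.id_apply, mul_smul_comm]
  · change (E s).natDegree ≤ _
    rcases eq_or_ne (E s) 0 with h0 | h0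
    · simp [h0]
    have h1 := natDegree_hasseDeriv_le (f ^ N * s) l
    have h2 := natDegree_mul_le (p := f ^ N) (q := s)
    rw [hE s, natDegree_mul hf0 h0, natDegree_pow] at h1
    rw [natDegree_pow] at h2
    have h3 : N * f.natDegree = (N - l) * f.natDegree + l * f.natDegree := by
      rw [← add_mul, Nat.sub_add_cancel hl]
    omega

theorem exists_ne_zero_forall_apply_eq_zero {ι V U : Type*} [Fintype ι] [AddCommGroup V]
    [Module K V] [AddCommGroup U] [Module K U] (W : Submodule K U) [Module.Finite K W]
    (T : ι → V →ₗ[K] U) (hT : ∀ i v, T i v ∈ W)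
    (h : Fintype.card ι * Module.finrank K W < Module.finrank K V) :
    ∃ v ≠ 0, ∀ i, T i v = 0 := by
  have : Module.Finite K V := Module.finite_of_finrank_pos (by omega)
  let S : V →ₗ[K] (ι → W) := LinearMap.pi fun i => (T i).codRestrict W (hT i)
  have hker : LinearMap.ker S ≠ ⊥ := by
    apply LinearMap.ker_ne_bot_of_finrank_lt
    rwa [Module.finrank_pi_fintype, sum_const, card_univ, smul_eq_mul]
  obtain ⟨v, hv, hv0⟩ := Submodule.exists_mem_ne_zero_of_ne_bot hker
  exact ⟨v, hv0, fun i => congrArg Subtype.val (congrFun (LinearMap.mem_ker.1 hv) i)⟩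

theorem finite_degreeLT (K : Type*) [Field K] (n : ℕ) : Module.Finite K (degreeLT K n) :=
  Module.Finite.equiv (degreeLTEquiv K n).symm

theorem finrank_degreeLT (K : Type*) [Field K] (n : ℕ) :
    Module.finrank K (degreeLT K n) = n := by
  rw [(degreeLTEquiv K n).finrank_eq, Module.finrank_fin_fun]

theorem natDegree_lt_of_mem_degreeLT {n : ℕ} {p : K[X]} (hn : 0 < n) (hp : p ∈ degreeLT K n) :
    p.natDegree < n := by
  rcases eq_or_ne p 0 with rfl | h0
  · simpa using hn
  · rw [mem_degreeLT] at hp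
    exact (natDegree_lt_iff_degree_lt h0).2 hp

/-- The auxiliary polynomial of Stepanov's method, `f ^ N ∑ rᵢⱼ (f ^ g) ^ i (X ^ Q) ^ j`. At the
points of a field with `Q` elements where `f ^ g` takes the value `a` it agrees with
`f ^ N ∑ rᵢⱼ a ^ i X ^ j`, a polynomial of far smaller degree. -/
noncomputable def stepanovPolynomial {d J : ℕ} (f : K[X]) (N g Q : ℕ)
    (r : Fin d × Fin J → K[X]) : K[X] :=
  ∑ ij, f ^ (N + ij.1 * g) * r ij * X ^ (ij.2 * Q)

theorem eval_hasseDeriv_stepanovPolynomial [Fintype K] {d J N g l : ℕ} {f : K[X]}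
    {r e : Fin d × Fin J → K[X]} (hlN : l ≤ N) (hl : l < Fintype.card K)
    (he : ∀ ij, hasseDeriv l (f ^ (N + ij.1 * g) * r ij) = f ^ (N + ij.1 * g - l) * e ij)
    (x : K) :
    (hasseDeriv l (stepanovPolynomial f N g (Fintype.card K) r)).eval x =
      f.eval x ^ (N - l) *
        (∑ ij : Fin d × Fin J, C ((f.eval x ^ g) ^ (ij.1 : ℕ)) * X ^ (ij.2 : ℕ) * e ij).eval x := by
  rw [stepanovPolynomial, map_sum, eval_finsetSum, eval_finsetSum, mul_sum]
  refine sum_congr rfl fun ij _ => ?_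
  have hx : x ^ ((ij.2 : ℕ) * Fintype.card K) = x ^ (ij.2 : ℕ) := by
    rw [mul_comm, pow_mul, FiniteField.pow_card]
  rw [hasseDeriv_mul_X_pow_card _ _ hl, he, Nat.sub_add_comm hlN]
  simp only [eval_mul, eval_pow, eval_C, eval_X, hx]
  ring

theorem exists_stepanovPolynomial_hasseDeriv_eq_zero [Fintype K] {f : K[X]} (hf : f ≠ 0)
    {d g L D J : ℕ} (a : K) (hL : L ≤ Fintype.card K)
    (hcount : L * (D + J + L * f.natDegree) < d * J * D) :
    ∃ r : Fin d × Fin J → K[X], (∃ ij, r ij ≠ 0) ∧ (∀ ij, (r ij).natDegree < D) ∧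
      ∀ l < L, ∀ x, f.eval x ^ g = a →
        (hasseDeriv l (stepanovPolynomial f L g (Fintype.card K) r)).eval x = 0 := by
  have hD : 0 < D := Nat.pos_of_ne_zero fun h => by simp [h] at hcount
  have := finite_degreeLT K
  choose E hE hdeg using fun (i : Fin d) (l : Fin L) =>
    exists_linearMap_hasseDeriv_pow_mul hf (l.2.le.trans (Nat.le_add_right L (i * g)))
  let T : Fin L → (Fin d × Fin J → degreeLT K D) →ₗ[K] K[X] := fun l =>
    ∑ ij, LinearMap.mulLeft K (C (a ^ (ij.1 : ℕ)) * X ^ (ij.2 : ℕ)) ∘ₗ E ij.1 l ∘ₗ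
      (degreeLT K D).subtype ∘ₗ LinearMap.proj ij
  have hT : ∀ l v, T l v = ∑ ij : Fin d × Fin J,
      C (a ^ (ij.1 : ℕ)) * X ^ (ij.2 : ℕ) * E ij.1 l (v ij) := fun l v =>
    LinearMap.sum_apply _ _ _
  have hmem : ∀ l v, T l v ∈ degreeLT K (D + J + L * f.natDegree) := by
    intro l v
    rw [hT]
    refine Submodule.sum_mem _ fun ij _ => mem_degreeLT.2 ?_
    refine degree_le_natDegree.trans_lt (Nat.cast_lt.2 ?_)
    have hE' := hdeg ij.1 l (v ij)
    have hv := natDegree_lt_of_mem_degreeLT hD (v ij).2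
    have hterm : (C (a ^ (ij.1 : ℕ)) * X ^ (ij.2 : ℕ) * E ij.1 l (v ij)).natDegree ≤
        ij.2 + (E ij.1 l (v ij)).natDegree :=
      natDegree_mul_le.trans (Nat.add_le_add_right (natDegree_C_mul_X_pow_le _ _) _)
    have hl : l * f.natDegree ≤ L * f.natDegree := Nat.mul_le_mul_right _ l.2.le
    have := ij.2.2
    omega
  obtain ⟨v, hv0, hv⟩ := exists_ne_zero_forall_apply_eq_zero _ T hmem <| by
    simpa [Module.finrank_pi_fintype, finrank_degreeLT] using hcount
  refine ⟨fun ij => v ij, ?_, fun ij => natDegree_lt_of_mem_degreeLT hD (v ij).2,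
    fun l hl x hx => ?_⟩
  · by_contra! h
    exact hv0 (funext fun ij => Subtype.ext (h ij))
  · rw [eval_hasseDeriv_stepanovPolynomial hl.le (hl.trans_le hL)
      (fun ij => hE ij.1 ⟨l, hl⟩ (v ij)), hx, ← hT ⟨l, hl⟩ v, hv, eval_zero, mul_zero]

theorem eq_and_eq_of_stepanov_exponent_eq {d m g D i j k l u w : ℕ} (hm : m.Coprime d)
    (hD : D + m ≤ g) (hi : i < d) (hk : k < d) (hu : u < D) (hw : w < D)
    (h : i * g * m + u + j * (d * g + 1) = k * g * m + w + l * (d * g + 1)) :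
    i = k ∧ j = l := by
  have key : (i : ℤ) * m + d * j = k * m + d * l := by
    zify at *
    have e : (d * (g : ℤ) + 1) * ((i * m + d * j) - (k * m + d * l)) =
      i * m - k * m + d * w - d * u := by linear_combination d * h
    have i1 : (i : ℤ) * m ≤ d * m := by gcongr
    have k1 : (k : ℤ) * m ≤ d * m := by gcongr
    have u1 : (d : ℤ) * u ≤ d * D := by gcongr
    have g1 : (d : ℤ) * (D + m) ≤ d * g := by gcongr
    have : (0 : ℤ) ≤ i * m := by positivity
    have : (0 : ℤ) ≤ k * m := by positivity
    have : (0 : ℤ) ≤ d * u := by positivity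
    have : (0 : ℤ) ≤ d * w := by positivity
    by_contra hne
    rcases lt_or_gt_of_ne hne with h | h
    · nlinarith
    · nlinarith
  have hik : i ≡ k [MOD d] := by
    refine Nat.ModEq.cancel_right_of_coprime (c := m) hm.symm ?_
    refine Nat.modEq_iff_dvd.2 ⟨(j : ℤ) - l, ?_⟩
    push_cast
    linear_combination -key
  obtain rfl := hik.eq_of_lt_of_lt hi hk
  refine ⟨rfl, ?_⟩
  have hd : (d : ℤ) ≠ 0 := by omega
  exact_mod_cast mul_left_cancel₀ hd (add_left_cancel key)

theorem stepanovPolynomial_ne_zero {f : K[X]} (hf : f ≠ 0) {d J N g D : ℕ}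
    (hm : f.natDegree.Coprime d) (hD : D + f.natDegree ≤ g) {r : Fin d × Fin J → K[X]}
    (hr : ∃ ij, r ij ≠ 0) (hdeg : ∀ ij, (r ij).natDegree < D) :
    stepanovPolynomial f N g (d * g + 1) r ≠ 0 := by
  let t : Fin d × Fin J → K[X] := fun ij =>
    f ^ (N + ij.1 * g) * r ij * X ^ (ij.2 * (d * g + 1))
  have ht : ∀ ij, t ij ≠ 0 → (t ij).natDegree =
      N * f.natDegree + (ij.1 * g * f.natDegree + (r ij).natDegree + ij.2 * (d * g + 1)) := by
    intro ij h
    rw [natDegree_mul_X_pow _ (left_ne_zero_of_mul h),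
      natDegree_mul (pow_ne_zero _ hf) (right_ne_zero_of_mul (left_ne_zero_of_mul h)),
      natDegree_pow]
    ring
  have hsum : (∑ ij, t ij).degree = univ.sup fun ij => (t ij).degree := by
    apply degree_sum_eq_of_disjoint
    rintro ij ⟨-, hij⟩ kl ⟨-, hkl⟩ hne heq
    have heq' := natDegree_eq_of_degree_eq heq
    rw [ht ij hij, ht kl hkl] at heq'
    obtain ⟨h1, h2⟩ := eq_and_eq_of_stepanov_exponent_eq hm hD ij.1.2 kl.1.2 (hdeg ij) (hdeg kl)
      (Nat.add_left_cancel heq')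
    exact hne (Prod.ext (Fin.ext h1) (Fin.ext h2))
  obtain ⟨ij₀, h₀⟩ := hr
  have h₀' : t ij₀ ≠ 0 := mul_ne_zero (mul_ne_zero (pow_ne_zero _ hf) h₀) (pow_ne_zero _ X_ne_zero)
  intro h
  change ∑ ij, t ij = 0 at h
  rw [h, degree_zero, eq_comm, Finset.sup_eq_bot_iff] at hsum
  exact h₀' (degree_eq_bot.1 (hsum ij₀ (mem_univ _)))

theorem natDegree_stepanovPolynomial_le {f : K[X]} {d J N g Q D : ℕ} {r : Fin d × Fin J → K[X]}
    (hdeg : ∀ ij, (r ij).natDegree ≤ D) (hD : D ≤ Q) (hg : d * g ≤ Q) :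
    (stepanovPolynomial f N g Q r).natDegree ≤ N * f.natDegree + (f.natDegree + J) * Q := by
  refine natDegree_sum_le_of_forall_le _ _ fun ij _ => ?_
  have h1 : (f ^ (N + ij.1 * g) * r ij * X ^ (ij.2 * Q)).natDegree ≤
      (N + ij.1 * g) * f.natDegree + D + ij.2 * Q := by
    refine natDegree_mul_le.trans (add_le_add (natDegree_mul_le.trans
      (add_le_add (natDegree_pow_le) (hdeg ij))) ?_)
    rw [natDegree_X_pow]
  have h2 : ij.1 * g ≤ Q := (Nat.mul_le_mul_right g ij.1.2.le).trans hg
  have h3 : (ij.2 + 1) * Q ≤ J * Q := Nat.mul_le_mul_right Q ij.2.2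
  have h4 : ij.1 * g * f.natDegree ≤ Q * f.natDegree := Nat.mul_le_mul_right _ h2
  linarith

theorem mul_card_le_natDegree_of_pow_dvd (s : Finset K) (n : ℕ) {p : K[X]} (hp : p ≠ 0)
    (h : ∀ x ∈ s, (X - C x) ^ n ∣ p) : n * #s ≤ p.natDegree := by
  have hdvd : ∏ x ∈ s, (X - C x) ^ n ∣ p := by
    refine Finset.prod_dvd_of_coprime (fun x _ y _ hxy => ?_) h
    exact (pairwise_coprime_X_sub_C Function.injective_id hxy).pow
  have := natDegree_le_of_dvd hdvd hp
  rw [natDegree_prod_of_monic _ _ fun x _ => (monic_X_sub_C x).pow n] at this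
  simpa [mul_comm] using this

theorem stepanov_bound_of_parameters [Fintype K] [DecidableEq K] {f : K[X]} (hf : f ≠ 0)
    {d g L D J : ℕ} (hm : f.natDegree.Coprime d) (hg : Fintype.card K = d * g + 1) (a : K)
    (hL : L ≤ Fintype.card K) (hD : D + f.natDegree ≤ g)
    (hcount : L * (D + J + L * f.natDegree) < d * J * D) :
    L * #{x : K | f.eval x ^ g = a} ≤
      L * f.natDegree + (f.natDegree + J) * Fintype.card K := by
  obtain ⟨r, hr, hdeg, hr0⟩ :=
    exists_stepanovPolynomial_hasseDeriv_eq_zero (g := g) hf a hL hcount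
  have hd : 0 < d := Nat.pos_of_ne_zero fun h => by simp [h] at hcount
  have hDg : D ≤ d * g := (Nat.le_of_add_right_le hD).trans (Nat.le_mul_of_pos_left g hd)
  have hR0 : stepanovPolynomial f L g (Fintype.card K) r ≠ 0 :=
    hg ▸ stepanovPolynomial_ne_zero hf hm hD hr hdeg
  refine (mul_card_le_natDegree_of_pow_dvd _ L hR0 fun x hx => ?_).trans
    (natDegree_stepanovPolynomial_le (fun ij => (hdeg ij).le) (by omega) (by omega))
  exact X_sub_C_pow_dvd_of_hasseDeriv fun l hl => hr0 l hl x (mem_filter.1 hx).2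

theorem exists_stepanov_parameters {d m g L : ℕ} (hd : 0 < d) (hL : L * L ≤ d * g + 1)
    (hLm : 2 * (d * (m + 2)) ≤ L) :
    ∃ D J, D + m ≤ g ∧ d * J ≤ L + d * (m + 2) ∧ L * (D + J + L * m) < d * J * D := by
  have hLL : 2 * (d * (m + 2)) * L ≤ L * L := Nat.mul_le_mul_right _ hLm
  have hmg : m ≤ g := by
    by_contra! h
    have : d * g ≤ d * m := Nat.mul_le_mul_left _ h.le
    nlinarith
  obtain ⟨D, rfl⟩ := Nat.exists_eq_add_of_le hmg
  obtain ⟨J, hJ⟩ : ∃ J, J = L / d + m + 2 := ⟨_, rfl⟩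
  have hJ1 : d * J ≤ L + d * (m + 2) := by
    have := Nat.mul_div_le L d
    rw [hJ]; linarith
  have hJ2 : L + d * (m + 1) + 1 ≤ d * J := by
    have := Nat.lt_mul_div_succ L hd
    rw [hJ]; linarith
  refine ⟨D, J, (add_comm _ _).le, hJ1, Nat.lt_of_mul_lt_mul_left (a := d) ?_⟩
  have hJD : (L + d * (m + 1) + 1) * (d * D) ≤ d * J * (d * D) := Nat.mul_le_mul_right _ hJ2
  have hLJ : L * (d * J) ≤ L * (L + d * (m + 2)) := Nat.mul_le_mul_left _ hJ1
  have hLD : (d * (m + 1) + 1) * (L * L) ≤ (d * (m + 1) + 1) * (d * (m + D) + 1) :=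
    Nat.mul_le_mul_left _ hL
  have hsq : (d * (m + 1) + 1) * (d * m + 1) ≤ d * (m + 2) * (d * (m + 2)) := by
    gcongr <;> nlinarith
  have hsqL : d * (m + 2) * (2 * (d * (m + 2))) ≤ d * (m + 2) * L := Nat.mul_le_mul_left _ hLm
  have hdLL : L * L ≤ d * (L * L) := Nat.le_mul_of_pos_left _ hd
  have hpos : 0 < d * (m + 2) * (d * (m + 2)) := by positivity
  nlinarith

theorem stepanov_bound [Fintype K] [DecidableEq K] {f : K[X]} (hf : f ≠ 0) {d g : ℕ}
    (hm : f.natDegree.Coprime d) (hg : Fintype.card K = d * g + 1) (a : K) :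
    d * #{x : K | f.eval x ^ g = a} ≤
      Fintype.card K + 3 * d ^ 2 * (f.natDegree + 2) * Nat.sqrt (Fintype.card K) := by
  have hd : 0 < d := by
    have := Fintype.one_lt_card (α := K)
    exact Nat.pos_of_ne_zero fun h => by simp [h] at hg; omega
  have hNQ : #{x : K | f.eval x ^ g = a} ≤ Fintype.card K := card_le_univ _
  have hparam := fun D J => stepanov_bound_of_parameters hf hm hg a
    (L := (Fintype.card K).sqrt) (D := D) (J := J) (Nat.sqrt_le_self _)
  generalize #{x : K | f.eval x ^ g = a} = N at *
  generalize f.natDegree = m at *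
  generalize Fintype.card K = Q at *
  have hL1 : Q.sqrt * Q.sqrt ≤ Q := Nat.sqrt_le _
  have hL2 : Q ≤ Q.sqrt * Q.sqrt + Q.sqrt + Q.sqrt := Nat.sqrt_le_add _
  generalize Q.sqrt = L at *
  rcases lt_or_ge L (2 * (d * (m + 2))) with hLm | hLm
  · have h1 : (L + 2) * L ≤ 3 * (d * (m + 2)) * L := Nat.mul_le_mul_right _ (by nlinarith)
    calc d * N ≤ d * (3 * (d * (m + 2)) * L) := Nat.mul_le_mul_left _ (by linarith)
      _ = 3 * d ^ 2 * (m + 2) * L := by ring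
      _ ≤ _ := Nat.le_add_left _ _
  obtain ⟨D, J, hD, hJ, hcount⟩ := exists_stepanov_parameters hd (hg ▸ hL1) hLm
  have hk : 0 < d * (m + 2) := by positivity
  refine Nat.le_of_mul_le_mul_left (c := L) ?_ (by omega)
  calc L * (d * N) = d * (L * N) := by ring
    _ ≤ d * (L * m + (m + J) * Q) := Nat.mul_le_mul_left _ (hparam D J hD hcount)
    _ = L * (d * m) + (d * m + d * J) * Q := by ring
    _ ≤ L * (d * m) + (d * m + (L + d * (m + 2))) * Q := by gcongr
    _ = L * Q + L * (d * m) + (2 * d * (m + 1)) * Q := by ring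
    _ ≤ L * Q + L * (d * m) + (2 * d * (m + 1)) * (L * L + L + L) := by gcongr
    _ ≤ L * Q + L * (3 * (d * (m + 2)) * L) := by
        have : 2 * (d * (m + 2)) * L ≤ L * L := Nat.mul_le_mul_right _ hLm
        nlinarith [Nat.mul_le_mul_left d this, Nat.le_mul_of_pos_left (L * L) hd]
    _ ≤ L * Q + L * (d * (3 * (d * (m + 2)) * L)) := by
        exact Nat.add_le_add_left (Nat.mul_le_mul_left _ (Nat.le_mul_of_pos_left _ hd)) _
    _ = L * (Q + 3 * d ^ 2 * (m + 2) * L) := by ring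

end Stepanov

section CharacterSums

theorem norm_sum_le_of_card_fiber_le {ι E : Type*} [NormedAddCommGroup E] [NormedSpace ℝ E]
    [DecidableEq E] {s : Finset ι} {S : Finset E} {h : ι → E} {U : ℝ} (hmaps : ∀ x ∈ s, h x ∈ S)
    (hS : ∑ z ∈ S, z = 0) (hnorm : ∀ z ∈ S, ‖z‖ ≤ 1)
    (hU : ∀ z ∈ S, (#{x ∈ s | h x = z} : ℝ) ≤ U) :
    ‖∑ x ∈ s, h x‖ ≤ #S * U - #s := by
  have hcard : (#s : ℝ) = ∑ z ∈ S, (#{x ∈ s | h x = z} : ℝ) := by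
    exact_mod_cast card_eq_sum_card_fiberwise hmaps
  have hsum : ∑ x ∈ s, h x = ∑ z ∈ S, ((#{x ∈ s | h x = z} : ℝ) - U) • z := by
    simp only [sub_smul, sum_sub_distrib]
    rw [← smul_sum, hS, smul_zero, sub_zero, ← sum_fiberwise_of_maps_to hmaps h]
    refine sum_congr rfl fun z _ => ?_
    rw [sum_congr rfl fun x hx => (mem_filter.1 hx).2, sum_const, Nat.cast_smul_eq_nsmul]
  calc ‖∑ x ∈ s, h x‖ ≤ ∑ z ∈ S, (U - #{x ∈ s | h x = z}) := by
        rw [hsum]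
        refine norm_sum_le_of_le _ fun z hz => ?_
        rw [norm_smul, Real.norm_eq_abs, abs_sub_comm, abs_of_nonneg (sub_nonneg.2 (hU z hz))]
        exact mul_le_of_le_one_right (sub_nonneg.2 (hU z hz)) (hnorm z hz)
    _ = #S * U - #s := by rw [sum_sub_distrib, ← hcard, sum_const, nsmul_eq_mul]

theorem sum_nthRootsFinset_one_eq_zero {R : Type*} [CommRing R] [IsDomain R] {d : ℕ} {μ : R}
    (hμ : IsPrimitiveRoot μ d) (hd : 1 < d) : ∑ z ∈ Polynomial.nthRootsFinset d (1 : R), z = 0 := by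
  classical
  have := NeZero.of_gt hd
  have himage : Polynomial.nthRootsFinset d (1 : R) = (range d).image (μ ^ ·) := by
    ext z
    rw [Polynomial.mem_nthRootsFinset (NeZero.pos d), mem_image]
    refine ⟨fun hz => ?_, ?_⟩
    · obtain ⟨i, hi, rfl⟩ := hμ.eq_pow_of_pow_eq_one hz
      exact ⟨i, mem_range.2 hi, rfl⟩
    · rintro ⟨i, -, rfl⟩
      rw [pow_right_comm, hμ.pow_eq_one, one_pow]
  rw [himage, sum_image, hμ.geom_sum_eq_zero hd]
  exact fun i hi j hj h => hμ.pow_inj (mem_range.1 hi) (mem_range.1 hj) h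

theorem pow_eq_pow_of_mulChar_apply_eq {K R : Type*} [Field K] [Fintype K] [CommMonoidWithZero R]
    {χ : MulChar K R} {g : ℕ} (hg : Fintype.card K = orderOf χ * g + 1) {y z : Kˣ}
    (hyz : χ y = χ z) : y ^ g = z ^ g := by
  classical
  obtain ⟨u, hu⟩ := IsCyclic.exists_monoid_generator (α := Kˣ)
  obtain ⟨j, hj⟩ := Submonoid.mem_powers_iff _ _ |>.1 (hu (y / z))
  have hχj : χ u ^ j = 1 := by
    have hdiv : χ.toUnitHom y = χ.toUnitHom z := Units.ext hyz
    rw [← map_pow, ← Units.val_pow_eq_pow_val, hj, ← MulChar.coe_toUnitHom, map_div, hdiv,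
      div_self', Units.val_one]
  have hdvd : orderOf χ ∣ j := by
    refine orderOf_dvd_of_pow_eq_one (MulChar.eq_one_iff.2 fun a => ?_)
    obtain ⟨i, rfl⟩ := Submonoid.mem_powers_iff _ _ |>.1 (hu a)
    rw [MulChar.pow_apply_coe, Units.val_pow_eq_pow_val, map_pow, pow_right_comm, hχj, one_pow]
  obtain ⟨i, rfl⟩ := hdvd
  rw [← div_eq_one, ← div_pow, ← hj, ← pow_mul,
    show orderOf χ * i * g = (orderOf χ * g) * i by ring, pow_mul,
    Nat.eq_sub_of_add_eq hg.symm, ← Fintype.card_units, pow_card_eq_one, one_pow]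

open Polynomial

theorem orderOf_mul_card_mulChar_eval_eq_le {K R : Type*} [Field K] [Fintype K] [CommRing R]
    [DecidableEq R] {χ : MulChar K R} {f : K[X]} (hf : f ≠ 0)
    (hm : f.natDegree.Coprime (orderOf χ)) {z : R} (hz : z ≠ 0) :
    orderOf χ * #{x : K | χ (f.eval x) = z} ≤
      Fintype.card K + 3 * orderOf χ ^ 2 * (f.natDegree + 2) * Nat.sqrt (Fintype.card K) := by
  classical
  rcases eq_empty_or_nonempty ({x : K | χ (f.eval x) = z} : Finset K) with h | ⟨x₀, h₀⟩
  · simp [h]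
  obtain ⟨g, hg⟩ := MulChar.orderOf_dvd_card_sub_one K χ
  replace hg : Fintype.card K = orderOf χ * g + 1 := by
    have : 0 < Fintype.card K := Fintype.card_pos
    omega
  refine le_trans ?_ (stepanov_bound hf hm hg (f.eval x₀ ^ g))
  refine Nat.mul_le_mul_left _ (card_le_card fun x hx => mem_filter.2 ⟨mem_univ _, ?_⟩)
  replace h₀ : χ (f.eval x₀) = z := (mem_filter.1 h₀).2
  replace hx : χ (f.eval x) = z := (mem_filter.1 hx).2
  have isUnit_of_apply_eq : ∀ y, χ y = z → IsUnit y := fun y hy =>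
    not_not.1 fun h => hz (hy ▸ χ.map_nonunit h)
  obtain ⟨u₀, hu₀⟩ := isUnit_of_apply_eq _ h₀
  obtain ⟨u, hu⟩ := isUnit_of_apply_eq _ hx
  rw [← hu₀] at h₀ ⊢
  rw [← hu] at hx ⊢
  exact congrArg Units.val (pow_eq_pow_of_mulChar_apply_eq hg (hx.trans h₀.symm))

theorem card_le_card_eval_ne_zero_add_natDegree {R : Type*} [CommRing R] [IsDomain R] [Fintype R]
    [DecidableEq R] {f : R[X]} (hf : f ≠ 0) :
    Fintype.card R ≤ #{x : R | f.eval x ≠ 0} + f.natDegree := by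
  have hzeros : #{x : R | f.eval x = 0} ≤ f.natDegree :=
    card_le_degree_of_subset_roots fun x hx => (mem_roots hf).2 (mem_filter.1 hx).2
  rw [← card_univ, ← card_filter_add_card_filter_not (fun x : R => f.eval x = 0), add_comm]
  exact Nat.add_le_add_left hzeros _

theorem mulChar_apply_mem_nthRootsFinset {F R : Type*} [Field F] [Finite F] [CommRing R]
    [IsDomain R] (χ : MulChar F R) {y : F} (hy : y ≠ 0) :
    χ y ∈ nthRootsFinset (orderOf χ) (1 : R) := by
  obtain ⟨ζ, hζ, hζy⟩ := χ.apply_mem_rootsOfUnity_orderOf hy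
  exact hζy ▸ (mem_nthRootsFinset χ.orderOf_pos 1).2 ((mem_rootsOfUnity' _ ζ).1 hζ)

theorem norm_sum_mulChar_eval_le_of_coprime {K : Type*} [Field K] [Fintype K] {χ : MulChar K ℂ}
    (hχ : χ ≠ 1) {f : K[X]} (hf : f ≠ 0) (hm : f.natDegree.Coprime (orderOf χ)) :
    ‖∑ x, χ (f.eval x)‖ ≤
      4 * orderOf χ ^ 2 * (f.natDegree + 2) * Real.sqrt (Fintype.card K) := by
  classical
  have hd : 1 < orderOf χ :=
    Nat.one_lt_iff_ne_zero_and_ne_one.2 ⟨χ.orderOf_pos.ne', mt orderOf_eq_one_iff.1 hχ⟩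
  have hd' : (0 : ℝ) < orderOf χ := Nat.cast_pos.2 χ.orderOf_pos
  have hμ := Complex.isPrimitiveRoot_exp _ χ.orderOf_pos.ne'
  have hmaps : ∀ x ∈ ({x : K | f.eval x ≠ 0} : Finset K),
      χ (f.eval x) ∈ nthRootsFinset (orderOf χ) (1 : ℂ) := fun x hx =>
    mulChar_apply_mem_nthRootsFinset χ (mem_filter.1 hx).2
  have hfibre : ∀ z ∈ nthRootsFinset (orderOf χ) (1 : ℂ),
      (#{x ∈ {x : K | f.eval x ≠ 0} | χ (f.eval x) = z} : ℝ) ≤ (Fintype.card K +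
        3 * orderOf χ ^ 2 * (f.natDegree + 2) * Real.sqrt (Fintype.card K)) / orderOf χ := by
    intro z hz
    rw [le_div_iff₀' hd']
    calc _ ≤ (orderOf χ : ℝ) * #{x : K | χ (f.eval x) = z} := by
          gcongr
          exact subset_univ _
      _ ≤ Fintype.card K +
          3 * orderOf χ ^ 2 * (f.natDegree + 2) * Nat.sqrt (Fintype.card K) := by
          exact_mod_cast orderOf_mul_card_mulChar_eval_eq_le hf hm
            (ne_zero_of_mem_nthRootsFinset one_ne_zero hz)
      _ ≤ _ := by
          gcongr
          exact Real.nat_sqrt_le_real_sqrt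
  have hbound := norm_sum_le_of_card_fiber_le hmaps (sum_nthRootsFinset_one_eq_zero hμ hd)
    (fun z hz => (Complex.norm_eq_one_of_pow_eq_one ((mem_nthRootsFinset χ.orderOf_pos 1).1 hz)
      χ.orderOf_pos.ne').le) hfibre
  rw [hμ.card_nthRootsFinset, mul_div_cancel₀ _ hd'.ne',
    sum_filter_of_ne (p := fun x => f.eval x ≠ 0)
      fun x _ hx h => hx (by rw [h, χ.map_zero])] at hbound
  have hcard : (Fintype.card K : ℝ) ≤ #{x : K | f.eval x ≠ 0} + f.natDegree := by
    exact_mod_cast card_le_card_eval_ne_zero_add_natDegree hf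
  have hm1 : (f.natDegree : ℝ) ≤
      orderOf χ ^ 2 * (f.natDegree + 2) * Real.sqrt (Fintype.card K) := by
    have h1 : (1 : ℝ) ≤ orderOf χ ^ 2 := one_le_pow₀ (by exact_mod_cast hd.le)
    have h2 : (1 : ℝ) ≤ Real.sqrt (Fintype.card K) := Real.one_le_sqrt.2 (by
      exact_mod_cast Fintype.card_pos (α := K))
    calc (f.natDegree : ℝ) ≤ 1 * (f.natDegree + 2) * 1 := by linarith
      _ ≤ _ := by gcongr
  linarith

/-- The lift `χ ∘ N_{K/F}` of a multiplicative character of `F` to an extension `K` of `F`. -/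
noncomputable def normLift (F K R : Type*) [Field F] [Field K] [Algebra F K]
    [CommMonoidWithZero R] : MulChar F R →* MulChar K R where
  toFun χ := MulChar.ofUnitHom (χ.toUnitHom.comp (Units.map (Algebra.norm F)))
  map_one' := by
    ext x
    simp [MulChar.one_apply (x.isUnit.map (Algebra.norm F))]
  map_mul' χ ψ := by ext; simp

theorem normLift_apply {F K R : Type*} [Field F] [Field K] [Algebra F K]
    [FiniteDimensional F K] [CommMonoidWithZero R] (χ : MulChar F R) (x : K) :
    normLift F K R χ x = χ (Algebra.norm F x) := by
  rcases eq_or_ne x 0 with rfl | hx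
  · rw [MulChar.map_zero, Algebra.norm_zero, MulChar.map_zero]
  · exact MulChar.ofUnitHom_coe _ (Units.mk0 x hx)

theorem normLift_injective (F K R : Type*) [Field F] [Field K] [Algebra F K] [Finite K]
    [CommMonoidWithZero R] : Function.Injective (normLift F K R) := by
  intro χ ψ h
  have : FiniteDimensional F K := Module.Finite.of_finite
  ext y
  obtain ⟨x, hx⟩ := FiniteField.norm_surjective F K (y : F)
  rw [← hx, ← normLift_apply χ x, ← normLift_apply ψ x, h]

end CharacterSums

section NewtonIdentities

open Polynomial Topology

theorem hasSum_coeff_mul_pow {R : Type*} [CommSemiring R] [TopologicalSpace R] (L : R[X]) (z : R) :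
    HasSum (fun n => L.coeff n * z ^ n) (L.eval z) := by
  rw [eval_eq_sum_range]
  refine hasSum_sum_of_ne_finset_zero fun n hn => ?_
  rw [coeff_eq_zero_of_natDegree_lt (by simpa [Nat.lt_succ_iff] using hn), zero_mul]

theorem coeff_X_mul_derivative {R : Type*} [CommSemiring R] (L : R[X]) (n : ℕ) :
    (X * derivative L).coeff n = n * L.coeff n := by
  cases n with
  | zero => simp
  | succ n => rw [coeff_X_mul, coeff_derivative, mul_comm, Nat.cast_succ]

theorem mul_eval_derivative_eq_tsum_mul_eval {L : ℂ[X]} {S : ℕ → ℂ}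
    (hrec : ∀ n : ℕ, n * L.coeff n = ∑ ij ∈ antidiagonal n, S ij.1 * L.coeff ij.2) {z : ℂ}
    (hS : Summable fun n => S n * z ^ n) :
    z * (derivative L).eval z = (∑' n, S n * z ^ n) * L.eval z := by
  have hL := hasSum_coeff_mul_pow L z
  have hX : (X * derivative L).eval z = z * (derivative L).eval z := by rw [eval_mul, eval_X]
  rw [← hX, ← hL.tsum_eq, ← (hasSum_coeff_mul_pow _ z).tsum_eq,
    tsum_mul_tsum_eq_tsum_sum_antidiagonal_of_summable_norm hS.norm hL.summable.norm]
  refine tsum_congr fun n => ?_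
  rw [coeff_X_mul_derivative, hrec, Finset.sum_mul]
  refine sum_congr rfl fun ij hij => ?_
  rw [← HasAntidiagonal.mem_antidiagonal.1 hij, pow_add]
  ring

theorem analyticOrderAt_eq_top_of_deriv_eventuallyEq_mul {L T : ℂ → ℂ} {ρ : ℂ}
    (hL : AnalyticAt ℂ L ρ) (hT : AnalyticAt ℂ T ρ) (hρ : L ρ = 0)
    (h : deriv L =ᶠ[𝓝 ρ] T * L) : analyticOrderAt L ρ = ⊤ := by
  have hderiv := hL.analyticOrderAt_deriv_add_one
  simp only [hρ, sub_zero] at hderiv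
  rw [analyticOrderAt_congr h, analyticOrderAt_mul hT hL] at hderiv
  by_contra htop
  lift analyticOrderAt L ρ to ℕ using htop with n
  cases h : analyticOrderAt T ρ with
  | top => simp [h] at hderiv
  | coe k =>
    rw [h] at hderiv
    norm_cast at hderiv
    omega

theorem one_le_mul_norm_of_isRoot {L : ℂ[X]} {S : ℕ → ℂ} {C R : ℝ} (hR : 0 < R)
    (hL0 : L.eval 0 ≠ 0) (hS : ∀ n, ‖S n‖ ≤ C * R ^ n)
    (hrec : ∀ n : ℕ, n * L.coeff n = ∑ ij ∈ antidiagonal n, S ij.1 * L.coeff ij.2)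
    {ρ : ℂ} (hρ : L.IsRoot ρ) : 1 ≤ R * ‖ρ‖ := by
  by_contra! hlt
  have hρ0 : ρ ≠ 0 := by
    rintro rfl
    exact hL0 hρ
  obtain ⟨r, hρr, hr⟩ : ∃ r, ‖ρ‖ < r ∧ R * r < 1 := by
    obtain ⟨r, h1, h2⟩ := exists_between ((lt_div_iff₀' hR).2 hlt)
    exact ⟨r, h1, (lt_div_iff₀' hR).1 h2⟩
  have hr0 : 0 ≤ r := (norm_nonneg ρ).trans hρr.le
  have hgeom : Summable fun n : ℕ => C * (R * r) ^ n :=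
    (summable_geometric_of_lt_one (by positivity) hr).mul_left C
  have hterm : ∀ n, ∀ z ∈ Metric.ball (0 : ℂ) r, ‖S n * z ^ n‖ ≤ C * (R * r) ^ n := by
    intro n z hz
    have hzr : ‖z‖ ≤ r := (mem_ball_zero_iff.1 hz).le
    rw [norm_mul, norm_pow, mul_pow, ← mul_assoc]
    exact mul_le_mul (hS n) (by gcongr) (by positivity) ((norm_nonneg _).trans (hS n))
  have hball : Metric.ball (0 : ℂ) r ∈ 𝓝 ρ :=
    Metric.isOpen_ball.mem_nhds (mem_ball_zero_iff.2 hρr)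
  have hanalytic : AnalyticAt ℂ (fun z => (∑' n, S n * z ^ n) / z) ρ :=
    ((Complex.differentiableOn_tsum_of_summable_norm hgeom (fun n => by fun_prop)
      Metric.isOpen_ball hterm).analyticAt hball).div analyticAt_id hρ0
  have hode : deriv (fun z => L.eval z) =ᶠ[𝓝 ρ]
      (fun z => (∑' n, S n * z ^ n) / z) * fun z => L.eval z := by
    filter_upwards [hball, isOpen_ne.mem_nhds hρ0] with z hz hz0
    have hsum : Summable fun n => S n * z ^ n := .of_norm_bounded hgeom fun n => hterm n z hz
    rw [Polynomial.deriv, Pi.mul_apply, div_mul_eq_mul_div, eq_div_iff hz0, mul_comm]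
    exact mul_eval_derivative_eq_tsum_mul_eval hrec hsum
  have htop := analyticOrderAt_eq_top_of_deriv_eventuallyEq_mul
    (L.differentiable.analyticAt ρ) hanalytic hρ hode
  have hL : L = 0 := eq_zero_of_infinite_isRoot L (infinite_of_mem_nhds ρ
    (analyticOrderAt_eq_top.1 htop))
  simp [hL] at hL0

theorem norm_coeff_one_le_of_newton_identities {L : ℂ[X]} {S : ℕ → ℂ} {C R : ℝ} (hR : 0 < R)
    (hL0 : L.coeff 0 = 1) (hS : ∀ n, ‖S n‖ ≤ C * R ^ n)
    (hrec : ∀ n : ℕ, n * L.coeff n = ∑ ij ∈ antidiagonal n, S ij.1 * L.coeff ij.2) :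
    ‖L.coeff 1‖ ≤ L.natDegree * R := by
  have heval : L.eval 0 = 1 := by rw [← coeff_zero_eq_eval_zero, hL0]
  have hroot : ∀ ρ ∈ L.roots, ‖(1 / (0 - ρ) : ℂ)‖ ≤ R := by
    intro ρ hρ
    have h := one_le_mul_norm_of_isRoot hR (heval ▸ one_ne_zero) hS hrec (isRoot_of_mem_roots hρ)
    have hpos : 0 < ‖ρ‖ := pos_of_mul_pos_right (one_pos.trans_le h) hR.le
    rwa [norm_div, norm_one, zero_sub, norm_neg, div_le_iff₀ hpos]
  have hcoeff : L.coeff 1 = (L.roots.map fun ρ => 1 / (0 - ρ)).sum := by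
    rw [← (IsAlgClosed.splits L).eval_derivative_div_eval_of_ne_zero (heval ▸ one_ne_zero), heval,
      div_one, ← coeff_zero_eq_eval_zero, coeff_derivative]
    simp
  rw [hcoeff]
  refine (norm_multiset_sum_le _).trans ((Multiset.sum_le_card_nsmul _ R ?_).trans ?_)
  · rw [Multiset.map_map]
    exact Multiset.forall_mem_map_iff.2 hroot
  · rw [Multiset.card_map, Multiset.card_map, nsmul_eq_mul]
    gcongr
    exact card_roots' L

end NewtonIdentities

section VonMangoldt

open Polynomial UniqueFactorizationMonoid

theorem finite_setOf_natDegree_le (F : Type*) [Field F] [Finite F] (n : ℕ) :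
    {p : F[X] | p.natDegree ≤ n}.Finite := by
  have := finite_degreeLT F (n + 1)
  have : Finite (degreeLT F (n + 1)) := Module.finite_of_finite F
  refine Set.Finite.subset (Set.toFinite (degreeLT F (n + 1) : Set F[X])) fun p hp => ?_
  rw [SetLike.mem_coe, mem_degreeLT]
  exact degree_le_natDegree.trans_lt (Nat.cast_lt.2 (Nat.lt_succ_of_le hp))

/-- The monic polynomials of degree `n` over a finite field. -/
noncomputable def monicsOfDegree (F : Type*) [Field F] [Finite F] (n : ℕ) : Finset F[X] :=
  ((finite_setOf_natDegree_le F n).subset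
    (fun _ h => h.2.le : {p : F[X] | p.Monic ∧ p.natDegree = n} ⊆ _)).toFinset

theorem mem_monicsOfDegree {F : Type*} [Field F] [Finite F] {n : ℕ} {p : F[X]} :
    p ∈ monicsOfDegree F n ↔ p.Monic ∧ p.natDegree = n := by
  simp [monicsOfDegree]

variable {F : Type*} [Field F] [DecidableEq F]

open Classical in
/-- The von Mangoldt function of `F[X]`, normalised to count degrees: its value at a power `P ^ j`
of an irreducible polynomial, `j ≥ 1`, is the degree of `P`, and it vanishes elsewhere. -/
noncomputable def polyVonMangoldt (g : F[X]) : ℕ :=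
  if IsPrimePow g then (radical g).natDegree else 0

theorem radical_pow_of_monic_irreducible {P : F[X]} (hP : P.Monic)
    (hPi : Irreducible P) {j : ℕ} (hj : j ≠ 0) : radical (P ^ j) = P := by
  rw [radical_pow_of_prime hPi.prime hj, hP.normalize_eq_self]

theorem polyVonMangoldt_pow {P : F[X]} (hP : P.Monic)
    (hPi : Irreducible P) {j : ℕ} (hj : j ≠ 0) : polyVonMangoldt (P ^ j) = P.natDegree := by
  rw [polyVonMangoldt, if_pos ⟨P, j, hPi.prime, Nat.pos_of_ne_zero hj, rfl⟩,
    radical_pow_of_monic_irreducible hP hPi hj]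

theorem exists_monic_irreducible_pow_of_polyVonMangoldt_ne_zero {g : F[X]}
    (hg : g.Monic) (h : polyVonMangoldt g ≠ 0) :
    ∃ P : F[X], P.Monic ∧ Irreducible P ∧ ∃ j, j ≠ 0 ∧ P ^ j = g := by
  obtain ⟨p, j, hp, hj, rfl⟩ : IsPrimePow g := by
    by_contra hg
    exact h (if_neg hg)
  refine ⟨normalize p, monic_normalize hp.ne_zero,
    (associated_normalize p).irreducible hp.irreducible, j, hj.ne', ?_⟩
  rw [← coe_normalizeHom, ← map_pow, coe_normalizeHom, hg.normalize_eq_self]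

theorem monic_and_irreducible_of_mem_normalizedFactors {g P : F[X]}
    (hP : P ∈ normalizedFactors g) : P.Monic ∧ Irreducible P :=
  have hPi := irreducible_of_normalized_factor P hP
  ⟨(normalize_eq_self_iff_monic hPi.ne_zero).1 (normalize_normalized_factor P hP), hPi⟩

theorem pow_dvd_iff_le_count {g P : F[X]} (hg : g ≠ 0)
    (hP : P.Monic) (hPi : Irreducible P) (j : ℕ) :
    P ^ j ∣ g ↔ j ≤ (normalizedFactors g).count P := by
  rw [dvd_iff_normalizedFactors_le_normalizedFactors (pow_ne_zero _ hPi.ne_zero) hg,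
    normalizedFactors_pow, normalizedFactors_irreducible hPi, hP.normalize_eq_self,
    Multiset.nsmul_singleton, Multiset.le_count_iff_replicate_le]

theorem natDegree_eq_sum_count_mul_natDegree {g : F[X]} (hg : g.Monic) :
    g.natDegree =
      ∑ P ∈ (normalizedFactors g).toFinset, (normalizedFactors g).count P * P.natDegree := by
  conv_lhs => rw [← hg.normalize_eq_self, ← prod_normalizedFactors_eq hg.ne_zero,
    natDegree_multiset_prod_of_monic _ fun P hP =>
      (monic_and_irreducible_of_mem_normalizedFactors hP).1]
  simp only [Finset.sum_multiset_map_count, smul_eq_mul]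

theorem sum_polyVonMangoldt_divisors {g : F[X]} (hg : g.Monic)
    {D : Finset F[X]} (hD : ∀ h, h ∈ D ↔ h.Monic ∧ h ∣ g) :
    ∑ h ∈ D, polyVonMangoldt h = g.natDegree := by
  have hsigma : g.natDegree = ∑ Pj ∈ (normalizedFactors g).toFinset.sigma
      fun P => Icc 1 ((normalizedFactors g).count P), Pj.1.natDegree := by
    simp only [natDegree_eq_sum_count_mul_natDegree hg, sum_sigma, sum_const,
      Nat.card_Icc, Nat.add_sub_cancel, smul_eq_mul]
  have hmem {P : F[X]} {j : ℕ} (h : ⟨P, j⟩ ∈ (normalizedFactors g).toFinset.sigma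
      fun P => Icc 1 ((normalizedFactors g).count P)) :
      (P.Monic ∧ Irreducible P) ∧ j ≠ 0 ∧ P ^ j ∣ g := by
    rw [mem_sigma, Multiset.mem_toFinset, mem_Icc] at h
    have hP := monic_and_irreducible_of_mem_normalizedFactors h.1
    exact ⟨hP, Nat.one_le_iff_ne_zero.1 h.2.1,
      (pow_dvd_iff_le_count hg.ne_zero hP.1 hP.2 j).2 h.2.2⟩
  rw [hsigma]
  symm
  refine sum_of_injOn (fun Pj => Pj.1 ^ Pj.2) ?_ ?_ ?_ ?_
  · rintro ⟨P, i⟩ hPi ⟨Q, j⟩ hQj (h : P ^ i = Q ^ j)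
    obtain ⟨⟨hP, hP'⟩, hi, -⟩ := hmem hPi
    obtain ⟨⟨hQ, hQ'⟩, hj, -⟩ := hmem hQj
    obtain rfl : P = Q := by
      rw [← radical_pow_of_monic_irreducible hP hP' hi, h,
        radical_pow_of_monic_irreducible hQ hQ' hj]
    obtain rfl : i = j := pow_injective_of_not_isUnit hP'.not_isUnit hP'.ne_zero h
    rfl
  · rintro ⟨P, j⟩ h
    obtain ⟨⟨hP, -⟩, -, hdvd⟩ := hmem h
    exact (hD _).2 ⟨hP.pow j, hdvd⟩
  · intro h hh hnot
    by_contra h0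
    obtain ⟨hm, hdvd⟩ := (hD h).1 hh
    obtain ⟨P, hP, hPi, j, hj, rfl⟩ := exists_monic_irreducible_pow_of_polyVonMangoldt_ne_zero hm h0
    rw [pow_dvd_iff_le_count hg.ne_zero hP hPi] at hdvd
    refine hnot ⟨⟨P, j⟩, ?_, rfl⟩
    rw [mem_coe, mem_sigma, Multiset.mem_toFinset, mem_Icc]
    have hj0 := Nat.pos_of_ne_zero hj
    exact ⟨Multiset.count_pos.1 (hj0.trans_le hdvd), hj0, hdvd⟩
  · rintro ⟨P, j⟩ h
    obtain ⟨⟨hP, hPi⟩, hj, -⟩ := hmem h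
    exact (polyVonMangoldt_pow hP hPi hj).symm

end VonMangoldt

section NewtonIdentity

open Polynomial

variable {F : Type*} [Field F] [Finite F]

open Classical in
theorem sum_monicsOfDegree_dvd {R : Type*} [NonAssocSemiring R] (lam : F[X] →* R) {n : ℕ}
    {h : F[X]} (hh : h.Monic) (hn : h.natDegree ≤ n) :
    ∑ g ∈ monicsOfDegree F n with h ∣ g, lam g =
      lam h * ∑ l ∈ monicsOfDegree F (n - h.natDegree), lam l := by
  rw [Finset.mul_sum]
  symm
  refine sum_bij (fun l _ => h * l) ?_ ?_ ?_ fun l _ => (map_mul lam h l).symm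
  · intro l hl
    obtain ⟨hl, hdeg⟩ := mem_monicsOfDegree.1 hl
    refine mem_filter.2 ⟨mem_monicsOfDegree.2 ⟨hh.mul hl, ?_⟩, dvd_mul_right _ _⟩
    rw [hh.natDegree_mul hl, hdeg, Nat.add_sub_cancel' hn]
  · exact fun l₁ _ l₂ _ hl => mul_left_cancel₀ hh.ne_zero hl
  · intro g hg
    obtain ⟨hg, l, rfl⟩ := mem_filter.1 hg
    obtain ⟨hg, hdeg⟩ := mem_monicsOfDegree.1 hg
    have hl := hh.of_mul_monic_left hg
    rw [hh.natDegree_mul hl] at hdeg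
    exact ⟨l, mem_monicsOfDegree.2 ⟨hl, Nat.eq_sub_of_add_eq' hdeg⟩, rfl⟩

theorem newton_identity_monicsOfDegree [DecidableEq F] {R : Type*} [CommSemiring R]
    (lam : F[X] →* R) (n : ℕ) :
    n * ∑ g ∈ monicsOfDegree F n, lam g =
      ∑ ij ∈ antidiagonal n, (∑ h ∈ monicsOfDegree F ij.1, polyVonMangoldt h * lam h) *
        ∑ g ∈ monicsOfDegree F ij.2, lam g := by
  classical
  set D := (range (n + 1)).biUnion (monicsOfDegree F) with hD
  have hmemD {h : F[X]} : h ∈ D ↔ h.Monic ∧ h.natDegree ≤ n := by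
    simp [hD, mem_monicsOfDegree, and_comm]
  have hdisj : ((range (n + 1) : Finset ℕ) : Set ℕ).PairwiseDisjoint (monicsOfDegree F) :=
    fun i _ j _ hij => disjoint_left.2 fun h hi hj =>
      hij ((mem_monicsOfDegree.1 hi).2.symm.trans (mem_monicsOfDegree.1 hj).2)
  calc (n : R) * ∑ g ∈ monicsOfDegree F n, lam g
      = ∑ g ∈ monicsOfDegree F n, ∑ h ∈ D with h ∣ g, polyVonMangoldt h * lam g := by
        rw [Finset.mul_sum]
        refine sum_congr rfl fun g hg => ?_
        obtain ⟨hg, hn⟩ := mem_monicsOfDegree.1 hg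
        rw [← Finset.sum_mul, ← Nat.cast_sum, sum_polyVonMangoldt_divisors hg, hn]
        intro h
        rw [mem_filter, hmemD, and_right_comm, and_iff_left_of_imp]
        exact fun hh => hn ▸ natDegree_le_of_dvd hh.2 hg.ne_zero
    _ = ∑ h ∈ D, polyVonMangoldt h * ∑ g ∈ monicsOfDegree F n with h ∣ g, lam g := by
        simp only [Finset.mul_sum, sum_filter, mul_ite, mul_zero]
        rw [sum_comm]
    _ = ∑ h ∈ D, polyVonMangoldt h * lam h *
          ∑ g ∈ monicsOfDegree F (n - h.natDegree), lam g := by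
        refine sum_congr rfl fun h hh => ?_
        rw [sum_monicsOfDegree_dvd lam (hmemD.1 hh).1 (hmemD.1 hh).2, mul_assoc]
    _ = _ := by
        rw [hD, sum_biUnion hdisj, Finset.Nat.sum_antidiagonal_eq_sum_range_succ_mk]
        refine sum_congr rfl fun k _ => ?_
        rw [Finset.sum_mul]
        exact sum_congr rfl fun h hh => by rw [(mem_monicsOfDegree.1 hh).2]

end NewtonIdentity

section PointCount

open Polynomial IntermediateField

theorem norm_algebraMap_sub_eq_eval_minpoly_pow {F K : Type*} [Field F] [Field K] [Algebra F K]
    [FiniteDimensional F K] [Algebra.IsSeparable F K] (x : K) (a : F) :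
    Algebra.norm F (algebraMap F K a - x) =
      ((minpoly F x).eval a) ^ (Module.finrank F K / (minpoly F x).natDegree) := by
  set y := x - algebraMap F K a with hy
  have hint : IsIntegral F y := Algebra.IsIntegral.isIntegral y
  have hminy : minpoly F y = (minpoly F x).comp (X + C a) := minpoly.sub_algebraMap x a
  have hdeg : (minpoly F y).natDegree = (minpoly F x).natDegree := by
    rw [hminy, natDegree_comp, natDegree_X_add_C, mul_one]
  have hfin : Module.finrank F F⟮y⟯ = (minpoly F x).natDegree := by
    rw [adjoin.finrank hint, hdeg]
  have htower := Module.finrank_mul_finrank F F⟮y⟯ K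
  have hpos : 0 < (minpoly F x).natDegree := minpoly.natDegree_pos (Algebra.IsIntegral.isIntegral x)
  have hk : Module.finrank F⟮y⟯ K = Module.finrank F K / (minpoly F x).natDegree := by
    rw [← htower, hfin, Nat.mul_div_cancel_left _ hpos]
  have hgen := Algebra.PowerBasis.norm_gen_eq_coeff_zero_minpoly (adjoin.powerBasis hint)
  rw [adjoin.powerBasis_gen, minpoly_gen, adjoin.powerBasis_dim, hdeg, hminy,
    coeff_zero_eq_eval_zero, eval_comp, eval_add, eval_X, eval_C, zero_add] at hgen
  have hnorm : Algebra.norm F y = (-1) ^ Module.finrank F K *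
      ((minpoly F x).eval a) ^ (Module.finrank F K / (minpoly F x).natDegree) := by
    rw [Algebra.norm_eq_norm_adjoin F y, hgen, mul_pow, ← pow_mul, hk, ← hk, ← hfin, htower]
  have hneg : algebraMap F K a - x = algebraMap F K (-1) * y := by
    rw [hy, map_neg, map_one]
    ring
  rw [hneg, map_mul, Algebra.norm_algebraMap, hnorm, ← mul_assoc, ← mul_pow]
  simp

variable {F K : Type*} [Field F] [Field K] [Algebra F K]

theorem card_filter_minpoly_eq [Finite F] [Fintype K] [DecidableEq F[X]] {P : F[X]}
    (hP : P.Monic) (hPi : Irreducible P) (hdvd : P.natDegree ∣ Module.finrank F K) :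
    #{x : K | minpoly F x = P} = P.natDegree := by
  classical
  have hcard : Nat.card F ^ Module.finrank F K = Fintype.card K := by
    have := Fintype.ofFinite F
    rw [Nat.card_eq_fintype_card, ← Module.card_eq_pow_finrank]
  have hsplit : (P.map (algebraMap F K)).Splits := by
    have h := hPi.natDegree_dvd_iff_dvd_X_pow_card_pow_sub_X.1 hdvd
    rw [hcard] at h
    exact (FiniteField.isSplittingField_sub K F).splits.of_dvd
      (map_ne_zero (FiniteField.X_pow_card_sub_X_ne_zero F Fintype.one_lt_card))
      (Polynomial.map_dvd _ h)
  rw [← card_rootSet_eq_natDegree (PerfectField.separable_of_irreducible hPi) hsplit,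
    ← Set.toFinset_card]
  congr 1
  ext x
  rw [mem_filter_univ, Set.mem_toFinset, mem_rootSet_of_ne hP.ne_zero]
  exact ⟨fun h => h ▸ minpoly.aeval F x,
    fun h => (minpoly.eq_of_irreducible_of_monic hPi h hP).symm⟩

theorem card_filter_minpoly_pow_eq [Finite F] [Fintype K] [DecidableEq F[X]] [DecidableEq F]
    {h : F[X]} (hh : h.Monic) (hn : h.natDegree = Module.finrank F K) :
    #{x : K | minpoly F x ^ (Module.finrank F K / (minpoly F x).natDegree) = h} =
      polyVonMangoldt h := by
  have hmin (x : K) : (minpoly F x).Monic ∧ Irreducible (minpoly F x) ∧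
      Module.finrank F K / (minpoly F x).natDegree ≠ 0 := by
    have hx : IsIntegral F x := Algebra.IsIntegral.isIntegral x
    exact ⟨minpoly.monic hx, minpoly.irreducible hx,
      (Nat.div_pos (minpoly.natDegree_le x) (minpoly.natDegree_pos hx)).ne'⟩
  by_cases h0 : polyVonMangoldt h = 0
  · rw [h0, card_eq_zero, filter_eq_empty_iff]
    rintro x - rfl
    obtain ⟨hP, hPi, hj⟩ := hmin x
    rw [polyVonMangoldt_pow hP hPi hj] at h0
    exact hPi.natDegree_pos.ne' h0
  · obtain ⟨P, hP, hPi, j, hj, rfl⟩ :=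
      exists_monic_irreducible_pow_of_polyVonMangoldt_ne_zero hh h0
    rw [polyVonMangoldt_pow hP hPi hj]
    rw [natDegree_pow] at hn
    rw [← card_filter_minpoly_eq hP hPi (hn ▸ dvd_mul_left _ _)]
    congr 1
    ext x
    simp only [mem_filter, mem_univ, true_and]
    constructor
    · intro hx
      obtain ⟨hQ, hQi, hi⟩ := hmin x
      rw [← radical_pow_of_monic_irreducible hQ hQi hi, hx,
        radical_pow_of_monic_irreducible hP hPi hj]
    · rintro rfl
      rw [← hn, Nat.mul_div_cancel _ hPi.natDegree_pos]

end PointCount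

section EvalCharacter

open Polynomial

theorem add_mem_monicsOfDegree {F : Type*} [Field F] [Finite F] {n : ℕ} {g h : F[X]}
    (hg : g ∈ monicsOfDegree F n) (hh : h.degree < n) : g + h ∈ monicsOfDegree F n := by
  rw [mem_monicsOfDegree] at hg ⊢
  have hdeg : h.degree < g.degree := by rwa [degree_eq_natDegree hg.1.ne_zero, hg.2]
  exact ⟨hg.1.add_of_left hdeg, by rw [natDegree_add_eq_left_of_degree_lt hdeg, hg.2]⟩

theorem sum_monicsOfDegree_add {F M : Type*} [Field F] [Finite F] [AddCommMonoid M]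
    (φ : F[X] → M) {n : ℕ} {h : F[X]} (hh : h.degree < n) :
    ∑ g ∈ monicsOfDegree F n, φ (g + h) = ∑ g ∈ monicsOfDegree F n, φ g :=
  sum_equiv (Equiv.addRight h) (fun g => ⟨fun hg => add_mem_monicsOfDegree hg hh, fun hg => by
    simpa using add_mem_monicsOfDegree hg ((degree_neg h).trans_lt hh)⟩) fun _ _ => rfl

theorem sum_monicsOfDegree_zero {F M : Type*} [Field F] [Finite F] [AddCommMonoid M]
    (φ : F[X] → M) : ∑ g ∈ monicsOfDegree F 0, φ g = φ 1 := by
  refine sum_eq_single_of_mem 1 (mem_monicsOfDegree.2 ⟨monic_one, natDegree_one⟩) ?_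
  intro g hg hg1
  obtain ⟨h1, h2⟩ := mem_monicsOfDegree.1 hg
  exact absurd (eq_one_of_monic_natDegree_zero h1 h2) hg1

theorem sum_monicsOfDegree_one {F M : Type*} [Field F] [Fintype F] [AddCommMonoid M]
    (φ : F[X] → M) : ∑ g ∈ monicsOfDegree F 1, φ g = ∑ x, φ (X + C x) := by
  symm
  refine sum_nbij (fun x => X + C x) ?_ ?_ ?_ fun _ _ => rfl
  · exact fun x _ => mem_monicsOfDegree.2 ⟨monic_X_add_C x, natDegree_X_add_C x⟩
  · exact fun x _ y _ hxy => C_injective (add_right_injective X hxy)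
  · intro g hg
    obtain ⟨h1, h2⟩ := mem_monicsOfDegree.1 hg
    exact ⟨g.coeff 0, mem_coe.2 (mem_univ _), (h1.eq_X_add_C h2).symm⟩

variable {F R ι : Type*} [Field F] [CommRing R]

/-- The completely multiplicative function `g ↦ ∏ i ∈ s, ψ i (g (v i))` on `F[X]` attached to
characters `ψ i` placed at the points `v i`: the Dirichlet character modulo `∏ i ∈ s, (X - v i)`
whose `L`-function governs the sum `∑ x, ∏ i ∈ s, ψ i (v i + x)`. -/
noncomputable def evalCharacter (s : Finset ι) (v : ι → F) (ψ : ι → MulChar F R) : F[X] →* R where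
  toFun g := ∏ i ∈ s, ψ i (g.eval (v i))
  map_one' := by simp
  map_mul' g h := by simp [prod_mul_distrib]

theorem evalCharacter_apply (s : Finset ι) (v : ι → F) (ψ : ι → MulChar F R) (g : F[X]) :
    evalCharacter s v ψ g = ∏ i ∈ s, ψ i (g.eval (v i)) := rfl

theorem sum_monicsOfDegree_evalCharacter_eq_zero [Finite F] [IsDomain R] [CharZero R]
    {s : Finset ι} {v : ι → F} (hv : Set.InjOn v s) {ψ : ι → MulChar F R} {b : ι} (hb : b ∈ s)
    (hψ : ψ b ≠ 1) {n : ℕ} (hn : #s ≤ n) :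
    ∑ g ∈ monicsOfDegree F n, evalCharacter s v ψ g = 0 := by
  classical
  have := Fintype.ofFinite F
  set L := Lagrange.basis s v b
  have hdeg : L.degree < n := by
    rw [Lagrange.degree_basis hv hb]
    exact_mod_cast (Nat.sub_lt (card_pos.2 ⟨b, hb⟩) one_pos).trans_le hn
  have hshift (g : F[X]) (t : F) : evalCharacter s v ψ (g + t • L) =
      ψ b (g.eval (v b) + t) * ∏ i ∈ s.erase b, ψ i (g.eval (v i)) := by
    rw [evalCharacter_apply, ← mul_prod_erase _ _ hb, eval_add, eval_smul,
      Lagrange.eval_basis_self hv hb, smul_eq_mul, mul_one]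
    refine congrArg _ (prod_congr rfl fun i hi => ?_)
    rw [eval_add, eval_smul, Lagrange.eval_basis_of_ne (ne_of_mem_erase hi).symm
      (mem_of_mem_erase hi), smul_zero, add_zero]
  have hzero (c : F) : ∑ t, ψ b (c + t) = 0 :=
    (Equiv.sum_comp (Equiv.addLeft c) (ψ b)).trans (MulChar.sum_eq_zero_of_ne_one hψ)
  have haverage : (Fintype.card F : R) * ∑ g ∈ monicsOfDegree F n, evalCharacter s v ψ g = 0 := by
    calc _ = ∑ t : F, ∑ g ∈ monicsOfDegree F n, evalCharacter s v ψ (g + t • L) := by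
          rw [sum_congr rfl fun t _ =>
              sum_monicsOfDegree_add _ ((degree_smul_le t L).trans_lt hdeg),
            sum_const, nsmul_eq_mul, card_univ]
      _ = 0 := by
          rw [sum_comm]
          refine sum_eq_zero fun g _ => ?_
          simp only [hshift]
          rw [← Finset.sum_mul, hzero, zero_mul]
  exact (mul_eq_zero.1 haverage).resolve_left (Nat.cast_ne_zero.2 Fintype.card_ne_zero)

end EvalCharacter

section WeilBound

open Polynomial

theorem sum_monicsOfDegree_polyVonMangoldt_mul {F R K : Type*} [Field F] [DecidableEq F] [Finite F]
    [Field K] [Fintype K] [Algebra F K] [CommSemiring R] (φ : F[X] → R) :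
    ∑ h ∈ monicsOfDegree F (Module.finrank F K), polyVonMangoldt h * φ h =
      ∑ x : K, φ (minpoly F x ^ (Module.finrank F K / (minpoly F x).natDegree)) := by
  have hmem (x : K) : minpoly F x ^ (Module.finrank F K / (minpoly F x).natDegree) ∈
      monicsOfDegree F (Module.finrank F K) := by
    have hx : IsIntegral F x := Algebra.IsIntegral.isIntegral x
    rw [mem_monicsOfDegree, natDegree_pow, Nat.div_mul_cancel (minpoly.degree_dvd hx)]
    exact ⟨(minpoly.monic hx).pow _, rfl⟩
  rw [← sum_fiberwise_of_maps_to fun x _ => hmem x]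
  refine sum_congr rfl fun h hh => ?_
  obtain ⟨hm, hdeg⟩ := mem_monicsOfDegree.1 hh
  rw [← card_filter_minpoly_pow_eq hm hdeg,
    sum_congr rfl fun x hx => by rw [(mem_filter.1 hx).2], sum_const, nsmul_eq_mul]

theorem mulChar_pow_apply_eq_pow_add_orderOf {F R : Type*} [CommMonoid F] [CommMonoidWithZero R]
    [Finite Fˣ] (χ : MulChar F R) (n : ℕ) (y : F) : (χ ^ n) y = χ y ^ (n + orderOf χ) := by
  rw [← MulChar.pow_apply' χ (Nat.add_pos_right n χ.orderOf_pos).ne', pow_add, pow_orderOf_eq_one,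
    mul_one]

theorem norm_sum_prod_pow_apply_norm_le {F K ι : Type*} [Field F] [Field K] [Fintype K]
    [Algebra F K] {χ : MulChar F ℂ} (hχ : χ ≠ 1) {s : Finset ι} (v : ι → F) {e : ι → ℕ}
    (he : (∑ i ∈ s, e i).Coprime (orderOf χ)) :
    ‖∑ x : K, ∏ i ∈ s, (χ ^ e i) (Algebra.norm F (algebraMap F K (v i) - x))‖ ≤
      4 * orderOf χ ^ 2 * (∑ i ∈ s, (e i + orderOf χ) + 2) * Real.sqrt (Fintype.card K) := by
  have : Finite F := Finite.of_injective _ (algebraMap F K).injective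
  have hord : orderOf (normLift F K ℂ χ) = orderOf χ :=
    orderOf_injective _ (normLift_injective F K ℂ) χ
  set f : K[X] := ∏ i ∈ s, (C (algebraMap F K (v i)) - X) ^ (e i + orderOf χ) with hf
  have hne : ∀ i ∈ s, (C (algebraMap F K (v i)) - X) ^ (e i + orderOf χ) ≠ 0 := fun i _ =>
    pow_ne_zero _ (sub_ne_zero.2 (X_ne_C _).symm)
  have hdeg : f.natDegree = ∑ i ∈ s, (e i + orderOf χ) := by
    rw [hf, natDegree_prod _ _ hne]
    refine sum_congr rfl fun i _ => ?_
    rw [natDegree_pow, ← neg_sub, natDegree_neg, natDegree_X_sub_C, mul_one]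
  have heval (x : K) : ∏ i ∈ s, (χ ^ e i) (Algebra.norm F (algebraMap F K (v i) - x)) =
      normLift F K ℂ χ (f.eval x) := by
    rw [hf, eval_prod, map_prod]
    refine prod_congr rfl fun i _ => ?_
    rw [mulChar_pow_apply_eq_pow_add_orderOf, eval_pow, map_pow, normLift_apply, eval_sub, eval_C,
      eval_X]
  have h := norm_sum_mulChar_eval_le_of_coprime (χ := normLift F K ℂ χ) (f := f)
    (fun h => hχ (normLift_injective F K ℂ (h.trans (map_one _).symm))) (prod_ne_zero_iff.2 hne) (by
      rw [hord, hdeg, sum_add_distrib, sum_const, smul_eq_mul]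
      exact (Nat.coprime_add_mul_right_left _ _ _).2 he)
  simpa only [heval, hord, hdeg, Nat.cast_sum] using h

theorem norm_sum_polyVonMangoldt_mul_evalCharacter_le {F ι : Type*} [Field F] [DecidableEq F]
    [Fintype F] {χ : MulChar F ℂ} (hχ : χ ≠ 1) {s : Finset ι} (v : ι → F) {e : ι → ℕ}
    (he : (∑ i ∈ s, e i).Coprime (orderOf χ)) (n : ℕ) :
    ‖∑ h ∈ monicsOfDegree F n, polyVonMangoldt h * evalCharacter s v (fun i => χ ^ e i) h‖ ≤
      4 * orderOf χ ^ 2 * (∑ i ∈ s, (e i + orderOf χ) + 2) * Real.sqrt (Fintype.card F) ^ n := by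
  rcases eq_or_ne n 0 with rfl | hn
  · simp only [sum_monicsOfDegree_zero, polyVonMangoldt, not_isPrimePow_one, if_false,
      Nat.cast_zero, zero_mul, norm_zero]
    positivity
  obtain ⟨p, hp⟩ := CharP.exists F
  have : Fact p.Prime := ⟨CharP.char_is_prime F p⟩
  have : NeZero n := ⟨hn⟩
  have := Fintype.ofFinite (FiniteField.Extension F p n)
  have hcard : Fintype.card (FiniteField.Extension F p n) = Fintype.card F ^ n := by
    rw [Fintype.card_eq_nat_card, FiniteField.natCard_extension, Nat.card_eq_fintype_card]
  have hsqrt : Real.sqrt (Fintype.card (FiniteField.Extension F p n)) =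
      Real.sqrt (Fintype.card F) ^ n := by
    rw [hcard, Nat.cast_pow, Real.sqrt_eq_iff_mul_self_eq (by positivity) (by positivity),
      ← mul_pow, Real.mul_self_sqrt (by positivity)]
  have h := norm_sum_prod_pow_apply_norm_le (K := FiniteField.Extension F p n) hχ v he
  have hsum := sum_monicsOfDegree_polyVonMangoldt_mul (K := FiniteField.Extension F p n)
    (evalCharacter s v fun i => χ ^ e i)
  rw [FiniteField.finrank_extension] at hsum
  rw [hsum]
  simpa only [evalCharacter_apply, eval_pow, FiniteField.finrank_extension,
    norm_algebraMap_sub_eq_eval_minpoly_pow, hsqrt] using h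

theorem norm_sum_prod_pow_apply_add_le_of_coprime {F ι : Type*} [Field F] [Fintype F]
    {χ : MulChar F ℂ} (hχ : χ ≠ 1) {s : Finset ι} {v : ι → F} (hv : Set.InjOn v s) {e : ι → ℕ}
    (he : (∑ i ∈ s, e i).Coprime (orderOf χ)) :
    ‖∑ x, ∏ i ∈ s, (χ ^ e i) (v i + x)‖ ≤ ((#s - 1 : ℕ) : ℝ) * Real.sqrt (Fintype.card F) := by
  classical
  obtain ⟨b, hb, hψ⟩ : ∃ b ∈ s, χ ^ e b ≠ 1 := by
    by_contra! h
    have hdvd : orderOf χ ∣ ∑ i ∈ s, e i := dvd_sum fun i hi => orderOf_dvd_of_pow_eq_one (h i hi)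
    exact hχ (orderOf_eq_one_iff.1 (Nat.eq_one_of_dvd_coprimes he hdvd dvd_rfl))
  set lam := evalCharacter s v fun i => χ ^ e i with hlam
  set L : ℂ[X] := ∑ n ∈ range #s, C (∑ g ∈ monicsOfDegree F n, lam g) * X ^ n with hL
  have hcoeff (n : ℕ) : L.coeff n = ∑ g ∈ monicsOfDegree F n, lam g := by
    simp only [hL, finsetSum_coeff, coeff_C_mul_X_pow, sum_ite_eq, mem_range]
    split_ifs with hn
    · rfl
    · exact (sum_monicsOfDegree_evalCharacter_eq_zero hv hb hψ (not_lt.1 hn)).symm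
  have hdeg : L.natDegree ≤ #s - 1 := natDegree_sum_le_of_forall_le _ _ fun n hn =>
    (natDegree_C_mul_X_pow_le _ n).trans (Nat.le_sub_one_of_lt (mem_range.1 hn))
  have hbound := norm_coeff_one_le_of_newton_identities (L := L)
    (Real.sqrt_pos.2 (Nat.cast_pos.2 Fintype.card_pos))
    (by rw [hcoeff, sum_monicsOfDegree_zero, map_one])
    (norm_sum_polyVonMangoldt_mul_evalCharacter_le hχ v he)
    fun n => by simpa only [hcoeff] using newton_identity_monicsOfDegree lam n
  simp only [hcoeff, sum_monicsOfDegree_one, hlam, evalCharacter_apply, eval_add, eval_X,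
    eval_C] at hbound
  exact hbound.trans (by gcongr)

theorem norm_sum_prod_pow_apply_sub_le_of_coprime {F ι : Type*} [Field F] [Fintype F]
    {χ : MulChar F ℂ} (hχ : χ ≠ 1) {s : Finset ι} {v : ι → F} (hv : Set.InjOn v s) {e : ι → ℕ}
    (he : (∑ i ∈ s, e i).Coprime (orderOf χ)) :
    ‖∑ x, ∏ i ∈ s, (χ ^ e i) (x - v i)‖ ≤ ((#s - 1 : ℕ) : ℝ) * Real.sqrt (Fintype.card F) := by
  simpa only [sub_eq_neg_add, Function.comp_apply] using
    norm_sum_prod_pow_apply_add_le_of_coprime hχ (neg_injective.comp_injOn hv) he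

theorem mulChar_prod_apply {F R ι : Type*} [CommMonoid F] [CommMonoidWithZero R]
    (ψ : ι → MulChar F R) (s : Finset ι) {y : F} (hy : IsUnit y) :
    (∏ i ∈ s, ψ i) y = ∏ i ∈ s, ψ i y := by
  classical
  induction s using Finset.induction_on with
  | empty => rw [prod_empty, prod_empty, MulChar.one_apply hy]
  | insert i s hi ih => rw [prod_insert hi, prod_insert hi, MulChar.mul_apply, ih]

/-- The substitution `x = v b + y⁻¹` moves the point `v b` to infinity, where the product of the
characters `ψ i` becomes trivial. -/
theorem sum_prod_apply_sub_eq_of_prod_eq_one {F R ι : Type*} [Field F] [Fintype F] [DecidableEq F]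
    [CommRing R] [DecidableEq ι] {s : Finset ι} {v : ι → F} (hv : Set.InjOn v s)
    {ψ : ι → MulChar F R} (hψ : ∏ i ∈ s, ψ i = 1) {b : ι} (hb : b ∈ s) :
    ∑ x, ∏ i ∈ s, ψ i (x - v i) = (∏ i ∈ s.erase b, ψ i (v b - v i)) *
      ∑ y ∈ univ.erase 0, ∏ i ∈ s.erase b, ψ i (y - (v i - v b)⁻¹) := by
  rw [← ((Equiv.inv F).trans (Equiv.addLeft (v b))).sum_comp, ← add_sum_erase _ _ (mem_univ 0)]
  simp only [Equiv.trans_apply, Equiv.inv_apply, Equiv.coe_addLeft, inv_zero, add_zero]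
  rw [prod_eq_zero hb (by rw [sub_self, MulChar.map_zero]), zero_add, Finset.mul_sum]
  refine sum_congr rfl fun y hy => ?_
  have hy0 : y ≠ 0 := ne_of_mem_erase hy
  have hfactor : ∀ i ∈ s.erase b, ψ i (v b + y⁻¹ - v i) =
      ψ i y⁻¹ * (ψ i (v b - v i) * ψ i (y - (v i - v b)⁻¹)) := by
    intro i hi
    have hne : v i - v b ≠ 0 := sub_ne_zero.2 fun h =>
      ne_of_mem_erase hi (hv (mem_of_mem_erase hi) hb h)
    rw [← map_mul, ← map_mul]
    congr 1
    field_simp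
    ring
  have hprod : ∏ i ∈ s, ψ i y⁻¹ = 1 := by
    rw [← mulChar_prod_apply ψ s (inv_ne_zero hy0).isUnit, hψ,
      MulChar.one_apply (inv_ne_zero hy0).isUnit]
  rw [← mul_prod_erase s _ hb, prod_congr rfl hfactor, prod_mul_distrib, add_sub_cancel_left,
    ← mul_assoc, mul_prod_erase s (fun i => ψ i y⁻¹) hb, hprod, one_mul, prod_mul_distrib]

theorem norm_mulChar_apply_le_one {F : Type*} [Field F] [Finite F] (χ : MulChar F ℂ) (y : F) :
    ‖χ y‖ ≤ 1 := by
  rcases eq_or_ne y 0 with rfl | hy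
  · rw [χ.map_zero, norm_zero]
    exact zero_le_one
  · refine (Complex.norm_eq_one_of_pow_eq_one ?_ χ.orderOf_pos.ne').le
    rw [← MulChar.pow_apply' χ χ.orderOf_pos.ne', pow_orderOf_eq_one, MulChar.one_apply hy.isUnit]

theorem norm_prod_mulChar_apply_le_one {F ι : Type*} [Field F] [Finite F] (s : Finset ι)
    (ψ : ι → MulChar F ℂ) (x : ι → F) : ‖∏ i ∈ s, ψ i (x i)‖ ≤ 1 := by
  rw [norm_prod]
  exact prod_le_one (fun _ _ => norm_nonneg _) fun i _ => norm_mulChar_apply_le_one (ψ i) _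

theorem norm_sum_prod_pow_apply_sub_le {F ι : Type*} [Field F] [Fintype F] {χ : MulChar F ℂ}
    {ℓ : ℕ} (hℓ : ℓ.Prime) (hχ : orderOf χ = ℓ) {s : Finset ι} {v : ι → F} (hv : Set.InjOn v s)
    {e : ι → ℕ} {b : ι} (hb : b ∈ s) (he : ¬ ℓ ∣ e b) :
    ‖∑ x, ∏ i ∈ s, (χ ^ e i) (x - v i)‖ ≤ (#s - 1) * Real.sqrt (Fintype.card F) := by
  classical
  subst hχ
  have hχ1 : χ ≠ 1 := fun h => hℓ.ne_one (orderOf_eq_one_iff.2 h)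
  have hcard : (#s : ℝ) = #(s.erase b) + 1 := by exact_mod_cast (card_erase_add_one hb).symm
  by_cases hsum : orderOf χ ∣ ∑ i ∈ s, e i
  swap
  · have h := norm_sum_prod_pow_apply_sub_le_of_coprime hχ1 hv
      ((Nat.Prime.coprime_iff_not_dvd hℓ).2 hsum).symm
    rwa [Nat.cast_sub (card_pos.2 ⟨b, hb⟩), Nat.cast_one] at h
  have hcop : (∑ i ∈ s.erase b, e i).Coprime (orderOf χ) := by
    refine ((Nat.Prime.coprime_iff_not_dvd hℓ).2 fun h => he ?_).symm
    rw [← add_sum_erase s e hb] at hsum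
    exact (Nat.dvd_add_left h).1 hsum
  have hone : (1 : ℝ) ≤ Real.sqrt (Fintype.card F) :=
    Real.one_le_sqrt.2 (by exact_mod_cast Fintype.card_pos (α := F))
  have herase : (s.erase b).Nonempty := by
    rw [nonempty_iff_ne_empty]
    intro h
    rw [h, sum_empty, Nat.coprime_zero_left] at hcop
    exact hℓ.ne_one hcop
  set G : F → ℂ := fun y => ∏ i ∈ s.erase b, (χ ^ e i) (y - (v i - v b)⁻¹)
  have hbound : ‖∑ y, G y‖ ≤ (#(s.erase b) - 1) * Real.sqrt (Fintype.card F) := by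
    have h := norm_sum_prod_pow_apply_sub_le_of_coprime hχ1 (v := fun i => (v i - v b)⁻¹)
      (fun i hi j hj hij => hv (mem_of_mem_erase hi) (mem_of_mem_erase hj)
        (sub_left_injective (inv_injective hij))) hcop
    rwa [Nat.cast_sub (card_pos.2 herase), Nat.cast_one] at h
  rw [sum_prod_apply_sub_eq_of_prod_eq_one hv (by
    rw [prod_pow_eq_pow_sum, orderOf_dvd_iff_pow_eq_one.1 hsum]) hb, norm_mul, hcard]
  calc _ ≤ 1 * ‖∑ y ∈ univ.erase 0, G y‖ := by
        gcongr
        exact norm_prod_mulChar_apply_le_one _ _ _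
    _ = ‖∑ y, G y - G 0‖ := by
        rw [one_mul, ← add_sum_erase univ G (mem_univ 0), add_sub_cancel_left]
    _ ≤ (#(s.erase b) - 1) * Real.sqrt (Fintype.card F) + 1 :=
        (norm_sub_le _ _).trans (add_le_add hbound (norm_prod_mulChar_apply_le_one _ _ _))
    _ ≤ _ := by linarith

end WeilBound

section CharacterProducts

theorem sum_Ico_mulChar_pow_apply {F R : Type*} [Field F] [Finite F] [CommRing R] [IsDomain R]
    (χ : MulChar F R) {y : F} (hy : y ≠ 0) (hχ : χ y ≠ 1) :
    ∑ i ∈ Ico 1 (orderOf χ), (χ ^ i) y = -1 := by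
  have hgeom : (χ y - 1) * ∑ i ∈ range (orderOf χ), χ y ^ i = 0 := by
    rw [mul_geom_sum, ← MulChar.pow_apply' χ χ.orderOf_pos.ne', pow_orderOf_eq_one,
      MulChar.one_apply hy.isUnit, sub_self]
  have hsum := (mul_eq_zero.1 hgeom).resolve_left (sub_ne_zero.2 hχ)
  rw [range_eq_Ico, sum_eq_sum_Ico_succ_bot χ.orderOf_pos, pow_zero] at hsum
  rw [sum_congr rfl fun i hi => MulChar.pow_apply' χ (Nat.one_le_iff_ne_zero.1 (mem_Ico.1 hi).1) y]
  linear_combination hsum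

theorem exists_mem_Icc_eq_orderOf_sub_one_sub_sum_pow_apply {F : Type*} [Field F] [Finite F]
    (χ : MulChar F ℂ) (y : F) :
    ∃ r ∈ Set.Icc (0 : ℝ) (orderOf χ),
      (orderOf χ - 1 - ∑ i ∈ Ico 1 (orderOf χ), (χ ^ i) y : ℂ) = r := by
  have hd : (1 : ℝ) ≤ orderOf χ := by exact_mod_cast χ.orderOf_pos
  rcases eq_or_ne y 0 with rfl | hy
  · refine ⟨orderOf χ - 1, ⟨sub_nonneg.2 hd, sub_le_self _ zero_le_one⟩, ?_⟩
    rw [sum_eq_zero fun i _ => MulChar.map_zero _]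
    push_cast
    ring
  rcases eq_or_ne (χ y) 1 with hχ | hχ
  · refine ⟨0, ⟨le_rfl, zero_le_one.trans hd⟩, ?_⟩
    rw [sum_congr rfl fun i hi => show (χ ^ i) y = 1 by
        rw [MulChar.pow_apply' χ (Nat.one_le_iff_ne_zero.1 (mem_Ico.1 hi).1), hχ, one_pow],
      sum_const, Nat.card_Ico, nsmul_one, Nat.cast_sub χ.orderOf_pos]
    push_cast
    ring
  · refine ⟨orderOf χ, ⟨zero_le_one.trans hd, le_rfl⟩, ?_⟩
    rw [sum_Ico_mulChar_pow_apply χ hy hχ]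
    push_cast
    ring

theorem norm_sum_prod_sum_pow_apply_sub_le {F : Type*} [Field F] [Fintype F] {χ : MulChar F ℂ}
    {ℓ : ℕ} (hℓ : ℓ.Prime) (hχ : orderOf χ = ℓ) {T : Finset F} (hT : T.Nonempty) :
    ‖∑ x, ∏ a ∈ T, ∑ i ∈ Ico 1 ℓ, (χ ^ i) (x - a)‖ ≤
      (ℓ - 1) ^ #T * ((#T - 1) * Real.sqrt (Fintype.card F)) := by
  classical
  obtain ⟨b, hb⟩ := hT
  have hexpand (x : F) : ∏ a ∈ T, ∑ i ∈ Ico 1 ℓ, (χ ^ i) (x - a) =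
      ∑ e ∈ Fintype.piFinset fun _ : T => Ico 1 ℓ, ∏ a, (χ ^ e a) (x - a) := by
    rw [← prod_coe_sort, prod_univ_sum]
  have hterm : ∀ e ∈ Fintype.piFinset fun _ : T => Ico 1 ℓ,
      ‖∑ x, ∏ a, (χ ^ e a) (x - a)‖ ≤ (#T - 1) * Real.sqrt (Fintype.card F) := by
    intro e he
    have heb := mem_Ico.1 (Fintype.mem_piFinset.1 he ⟨b, hb⟩)
    simpa only [card_univ, Fintype.card_coe] using
      norm_sum_prod_pow_apply_sub_le hℓ hχ Subtype.val_injective.injOn (mem_univ ⟨b, hb⟩)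
        (Nat.not_dvd_of_pos_of_lt heb.1 heb.2)
  rw [sum_congr rfl fun x _ => hexpand x, sum_comm]
  refine (norm_sum_le_of_le _ hterm).trans_eq ?_
  rw [sum_const, Fintype.card_piFinset, prod_const, card_univ, Nat.card_Ico, Fintype.card_coe,
    nsmul_eq_mul, Nat.cast_pow, Nat.cast_sub hℓ.one_le, Nat.cast_one]

theorem two_mul_sum_powerset_card {α : Type*} (A : Finset α) :
    2 * ∑ T ∈ A.powerset, #T = #A * 2 ^ #A := by
  rw [sum_powerset_apply_card fun m => m]
  simp only [smul_eq_mul, mul_comm (Nat.choose _ _), Nat.sum_range_mul_choose]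
  rcases eq_or_ne #A 0 with h0 | h0
  · simp only [h0, zero_mul, mul_zero]
  · rw [mul_left_comm, mul_pow_sub_one h0]

theorem sum_powerset_erase_empty_card_sub_one {α : Type*} [DecidableEq α] (A : Finset α) :
    ∑ T ∈ A.powerset.erase ∅, ((#T : ℝ) - 1) = (#A - 2) / 2 * 2 ^ #A + 1 := by
  have herase := add_sum_erase A.powerset (fun T => (#T : ℝ) - 1) (empty_mem_powerset A)
  have hcard : 2 * ∑ T ∈ A.powerset, (#T : ℝ) = #A * 2 ^ #A := by
    exact_mod_cast two_mul_sum_powerset_card A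
  have htotal : ∑ T ∈ A.powerset, ((#T : ℝ) - 1) = ∑ T ∈ A.powerset, (#T : ℝ) - 2 ^ #A := by
    rw [sum_sub_distrib, sum_const, card_powerset, nsmul_one, Nat.cast_pow, Nat.cast_two]
  rw [htotal, card_empty, Nat.cast_zero] at herase
  linarith

theorem norm_sum_prod_sub_sum_pow_apply_sub_le {F : Type*} [Field F] [Fintype F]
    {χ : MulChar F ℂ} {ℓ : ℕ} (hℓ : ℓ.Prime) (hχ : orderOf χ = ℓ) (A : Finset F) :
    ‖∑ x, ∏ a ∈ A, (ℓ - 1 - ∑ i ∈ Ico 1 ℓ, (χ ^ i) (x - a)) - (ℓ - 1) ^ #A * Fintype.card F‖ ≤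
      (ℓ - 1) ^ #A * ((#A - 2) / 2 * 2 ^ #A + 1) * Real.sqrt (Fintype.card F) := by
  classical
  have hℓ1 : (0 : ℝ) ≤ ℓ - 1 := sub_nonneg.2 (by exact_mod_cast hℓ.one_le)
  have hnorm : ‖(ℓ - 1 : ℂ)‖ = ℓ - 1 := by
    rw [← Complex.ofReal_natCast, ← Complex.ofReal_one, ← Complex.ofReal_sub,
      Complex.norm_of_nonneg hℓ1]
  set h : Finset F → ℂ := fun T => ∑ x, ∏ a ∈ T, ∑ i ∈ Ico 1 ℓ, (χ ^ i) (x - a) with hh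
  have hexpand : ∑ x, ∏ a ∈ A, (ℓ - 1 - ∑ i ∈ Ico 1 ℓ, (χ ^ i) (x - a)) =
      ∑ T ∈ A.powerset, (-1) ^ #T * (ℓ - 1) ^ #(A \ T) * h T := by
    simp only [hh, Finset.mul_sum]
    rw [sum_comm]
    refine sum_congr rfl fun x _ => ?_
    simp only [sub_eq_neg_add (_ - _ : ℂ)]
    rw [prod_add]
    refine sum_congr rfl fun T _ => ?_
    rw [prod_neg, prod_const]
    ring
  have hempty : h ∅ = Fintype.card F := by simp [hh]
  rw [hexpand, ← add_sum_erase _ _ (empty_mem_powerset A), hempty, sdiff_empty, card_empty,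
    pow_zero, one_mul, add_sub_cancel_left, ← sum_powerset_erase_empty_card_sub_one,
    Finset.mul_sum, Finset.sum_mul]
  refine norm_sum_le_of_le _ fun T hT => ?_
  obtain ⟨hT0, hTA⟩ := mem_erase.1 hT
  calc ‖(-1) ^ #T * (ℓ - 1) ^ #(A \ T) * h T‖ = (ℓ - 1) ^ #(A \ T) * ‖h T‖ := by
        rw [norm_mul, norm_mul, norm_pow, norm_pow, norm_neg, norm_one, one_pow, one_mul, hnorm]
    _ ≤ (ℓ - 1) ^ #(A \ T) * ((ℓ - 1) ^ #T * ((#T - 1) * Real.sqrt (Fintype.card F))) := by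
        gcongr
        exact norm_sum_prod_sum_pow_apply_sub_le hℓ hχ (nonempty_iff_ne_empty.2 hT0)
    _ = (ℓ - 1) ^ #A * (#T - 1) * Real.sqrt (Fintype.card F) := by
        rw [← card_sdiff_add_card_eq_card (mem_powerset.1 hTA), pow_add]
        ring

theorem card_zero_one_neg_one_sqrt {F : Type*} [Field F] [DecidableEq F] (h2 : (2 : F) ≠ 0) {ζ : F}
    (hζ : ζ ^ 2 = -1) : #({0, 1, -1, ζ, -ζ} : Finset F) = 5 := by
  have hζ0 : ζ ≠ 0 := by
    rintro rfl
    norm_num at hζ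
  have h11 : (1 : F) ≠ -1 := fun h => h2 (by linear_combination h)
  have h1 : ζ ≠ 1 := by
    rintro rfl
    exact h11 (by simpa using hζ)
  have h1' : ζ ≠ -1 := by
    rintro rfl
    exact h11 (by simpa using hζ)
  have hζζ : ζ ≠ -ζ := fun h => mul_ne_zero h2 hζ0 (by linear_combination h)
  have h1n : (1 : F) ≠ -ζ := fun h => h1' (by linear_combination h)
  rw [card_insert_of_notMem, card_insert_of_notMem, card_insert_of_notMem, card_insert_of_notMem,
    card_singleton]
  · simpa using hζζ
  · simpa using ⟨h1'.symm, h1.symm⟩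
  · simpa using ⟨h11, h1.symm, h1n⟩
  · simpa using ⟨hζ0.symm, hζ0⟩

end CharacterProducts

theorem cubic_char_sum_lower_bound_general {F : Type*} [Field F] [Fintype F] [DecidableEq F]
    {χ : MulChar F ℂ} {ℓ : ℕ} (hℓ : ℓ.Prime) (hχ : orderOf χ = ℓ) (A : Finset F) :
    (∑ γ ∈ univ \ A, ∏ α ∈ A, (ℓ - 1 - ∑ i ∈ Ico 1 ℓ, (χ ^ i) (γ - α))).im = 0 ∧
      (ℓ - 1) ^ #A * (Fintype.card F - ((#A - 2) / 2 * 2 ^ #A + 1) * Real.sqrt (Fintype.card F)) -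
          #A * ℓ ^ #A ≤
        (∑ γ ∈ univ \ A, ∏ α ∈ A, (ℓ - 1 - ∑ i ∈ Ico 1 ℓ, (χ ^ i) (γ - α))).re := by
  choose w hwmem hw using fun y : F =>
    hχ ▸ exists_mem_Icc_eq_orderOf_sub_one_sub_sum_pow_apply χ y
  have hbound := norm_sum_prod_sub_sum_pow_apply_sub_le hℓ hχ A
  have hcast (s : Finset F) : ∑ γ ∈ s, ∏ α ∈ A, (ℓ - 1 - ∑ i ∈ Ico 1 ℓ, (χ ^ i) (γ - α)) =
      ((∑ γ ∈ s, ∏ α ∈ A, w (γ - α) : ℝ) : ℂ) := by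
    simp only [hw, Complex.ofReal_sum, Complex.ofReal_prod]
  have hA : ∑ γ ∈ A, ∏ α ∈ A, w (γ - α) ≤ #A * ℓ ^ #A := by
    rw [← nsmul_eq_mul]
    exact sum_le_card_nsmul _ _ _ fun γ _ =>
      (prod_le_prod (fun _ _ => (hwmem _).1) fun _ _ => (hwmem _).2).trans_eq (prod_const _)
  have hmain : ((ℓ : ℂ) - 1) ^ #A * Fintype.card F = ((ℓ - 1) ^ #A * Fintype.card F : ℝ) := by
    push_cast
    rfl
  rw [hcast, hmain, ← Complex.ofReal_sub, Complex.norm_real, Real.norm_eq_abs,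
    ← sum_sdiff (subset_univ A)] at hbound
  rw [hcast, Complex.ofReal_re]
  refine ⟨Complex.ofReal_im _, ?_⟩
  linarith [(abs_le.1 hbound).1]

/-- For a prime power `q ≡ 1 (mod 4)` with `3 ∣ q - 1`, with `C₅ = {0, 1, -1, ζ, -ζ}` where
`ζ² = -1`, and a multiplicative character `χ₃` of order `3`, the character sum
`S(3; q, 5) = ∑_{γ ∈ F_q \ C₅} ∏_{α ∈ C₅} (2 - χ₃(γ - α) - χ₃((γ - α)²))` is real and
satisfies `S(3; q, 5) ≥ 2⁵ (q - 49 √q - 160)`. -/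
theorem cubic_char_sum_lower_bound
    (q : ℕ) (hq : IsPrimePow q) (hq4 : q % 4 = 1) (h3 : 3 ∣ q - 1)
    (F : Type*) [Field F] [Fintype F] [DecidableEq F] (hF : Fintype.card F = q)
    (ζ : F) (hζ : ζ ^ 2 = -1)
    (χ : MulChar F ℂ) (hχ : orderOf χ = 3) :
    (∑ γ ∈ univ \ ({0, 1, -1, ζ, -ζ} : Finset F),
        ∏ α ∈ ({0, 1, -1, ζ, -ζ} : Finset F),
          (2 - χ (γ - α) - χ ((γ - α) ^ 2))).im = 0 ∧
      2 ^ 5 * ((q : ℝ) - 49 * Real.sqrt q - 160) ≤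
        (∑ γ ∈ univ \ ({0, 1, -1, ζ, -ζ} : Finset F),
          ∏ α ∈ ({0, 1, -1, ζ, -ζ} : Finset F),
            (2 - χ (γ - α) - χ ((γ - α) ^ 2))).re := by
  have h2 : (2 : F) ≠ 0 := Ring.two_ne_zero fun h => by
    have := FiniteField.even_card_of_char_two h
    omega
  have hfactor (y : F) : 2 - χ y - χ (y ^ 2) = ((3 : ℕ) : ℂ) - 1 - ∑ i ∈ Ico 1 3, (χ ^ i) y := by
    rw [sum_Ico_succ_top (by norm_num), Nat.Ico_succ_singleton, sum_singleton, pow_one,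
      MulChar.pow_apply' χ two_ne_zero, map_pow]
    push_cast
    ring
  simp only [hfactor]
  obtain ⟨him, hre⟩ := cubic_char_sum_lower_bound_general Nat.prime_three hχ
    ({0, 1, -1, ζ, -ζ} : Finset F)
  refine ⟨him, le_trans ?_ hre⟩
  rw [card_zero_one_neg_one_sqrt h2 hζ, hF]
  norm_num
  linarith
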